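/- For every d, α ∈ (0,1] there exist an integer n₀ and a real ρ > 0 such that the following holds for all n ≥ n₀: if H is an n-vertex (ρ,d)-cherry-dense 3-graph satisfying δ₂(H) ≥ αn, then H contains a tight Hamilton cycle. -/

import Mathlib

/-!
The proof is by the absorption method, with every random choice replaced by a deterministic greedy
one.

*Connecting.* Cherry-density says that, for any sets of pairs `G₁, G₂`, about a `d`-fraction at
least of the cherries formed by them are edges. Start from a pair `(a, b)`: the codegree condition
yields linearly many tight paths `a b x y` for each of linearly many `y`, and `few_bad` shows that
for almost all continuations `(y, z)` a linear number of these `x` also give an edge `xyz`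
(`reach`). Doing this from both ends and applying cherry-density once more to the two sets of good
pairs gives a tight path with five inner vertices between any two pairs (`connect`). Only codegrees
into a vertex set `W` are used, so that the inner vertices can be taken in `W`.

*Absorbing.* A quadruple `(a, b, c, d)` absorbs `v` if `a b v c d` is a tight path. Applying
`few_bad` to the link of `v` shows that every `v` is absorbed by a positive proportion of all
quadruples that are themselves tight paths (`many_absorbers`). A weighted averaging argument
(`greedy`) selects linearly many disjoint quadruples, connected into one tight path, such that
every vertex is absorbed by linearly many of them (`absorbing_path`). By Hall's theorem such a path
absorbs every set of at most that many outside vertices (`absorb`).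

*Reservoir and covering.* The same greedy selection produces a small set `R` into which all
codegrees are linear (`reservoir`); the absorbing path is built outside `R`. Every linear-size set
contains a tight path of any given constant length (`long_path`), since it spans cubically many
edges, and one may pass to a subfamily of them in which all covered pairs have large degree.
Attaching such paths one after the other with five vertices of `R` each, and taking the constant
length large, leaves most of `R` intact (`cover`) until few vertices outside `R` are missing. The
ends are then joined through `R`, and the remaining vertices, including what is left of `R`, are
absorbed.
-/


open Finset

/-- An `n`-vertex 3-graph `H` is `(ρ,d)`-cherry-dense if for all sets of ordered pairs
`G₁, G₂ ⊆ V × V`, the number of cherries `(x,y,z)` with `(x,y) ∈ G₁`, `(y,z) ∈ G₂` and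
`{x,y,z} ∈ E(H)` is at least `d·|P₂(G₁,G₂)| − ρn³`. -/
def CherryDense (n : ℕ) (H : Finset (Finset (Fin n))) (ρ d : ℝ) : Prop :=
  ∀ G₁ G₂ : Finset (Fin n × Fin n),
    ((((Finset.univ : Finset (Fin n × Fin n × Fin n)).filter fun t =>
          (t.1, t.2.1) ∈ G₁ ∧ (t.2.1, t.2.2) ∈ G₂).filter fun t =>
          ({t.1, t.2.1, t.2.2} : Finset (Fin n)) ∈ H).card : ℝ) ≥
      d * (((Finset.univ : Finset (Fin n × Fin n × Fin n)).filter fun t =>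
          (t.1, t.2.1) ∈ G₁ ∧ (t.2.1, t.2.2) ∈ G₂).card : ℝ) - ρ * (n : ℝ) ^ 3

/-- The vertex degree `deg_H(v)`: the number of edges of `H` containing `v`. -/
def vdeg (n : ℕ) (H : Finset (Finset (Fin n))) (v : Fin n) : ℕ :=
  (H.filter fun e => v ∈ e).card

/-- The codegree `deg_H(xy)`: the number of edges of `H` containing both `x` and `y`. -/
def codeg (n : ℕ) (H : Finset (Finset (Fin n))) (x y : Fin n) : ℕ :=
  (H.filter fun e => x ∈ e ∧ y ∈ e).card

/-- The codegree of an (unordered) pair `S`: the number of edges of `H` containing `S`. -/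
def pairDeg (n : ℕ) (H : Finset (Finset (Fin n))) (S : Finset (Fin n)) : ℕ :=
  (H.filter fun e => S ⊆ e).card

/-- `H` has a tight Hamilton cycle: a cyclic ordering of all `n` vertices such that
every 3 consecutive vertices form an edge. -/
def HasTightHamCycle (n : ℕ) (H : Finset (Finset (Fin n))) : Prop :=
  ∃ f : ZMod n → Fin n, Function.Bijective f ∧
    ∀ i : ZMod n, ({f i, f (i + 1), f (i + 2)} : Finset (Fin n)) ∈ H

namespace CherryHam

/-! ### Tight paths and absorption -/

/-- The ordered triple `x, y, z` spans an edge of `H`. -/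
abbrev Edge {n : ℕ} (H : Finset (Finset (Fin n))) (x y z : Fin n) : Prop :=
  ({x, y, z} : Finset (Fin n)) ∈ H

/-- Every three consecutive entries of the list span an edge of `H`. Distinctness of the entries
is not part of the definition, so a tight path is a list with `Tight H l` and `l.Nodup`. -/
def Tight {n : ℕ} (H : Finset (Finset (Fin n))) : List (Fin n) → Prop
  | a :: b :: c :: l => Edge H a b c ∧ Tight H (b :: c :: l)
  | _ => True

lemma Tight.join {n : ℕ} {H : Finset (Finset (Fin n))} {u v : Fin n} {r : List (Fin n)} :
    ∀ {l : List (Fin n)}, Tight H (l ++ [u, v]) → Tight H (u :: v :: r) →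
      Tight H (l ++ u :: v :: r)
  | [], _, h2 => h2
  | [_], h1, h2 => ⟨h1.1, h2⟩
  | [_, _], h1, h2 => ⟨h1.1, h1.2.1, h2⟩
  | _ :: b :: c :: l, h1, h2 => ⟨h1.1, Tight.join (l := b :: c :: l) h1.2 h2⟩

lemma Tight.tail {n : ℕ} {H : Finset (Finset (Fin n))} {a : Fin n} :
    ∀ {l : List (Fin n)}, Tight H (a :: l) → Tight H l
  | [], _ => trivial
  | [_], _ => trivial
  | _ :: _ :: _, h => h.2

lemma Tight.left {n : ℕ} {H : Finset (Finset (Fin n))} {r : List (Fin n)} :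
    ∀ {l : List (Fin n)}, Tight H (l ++ r) → Tight H l
  | [], _ => trivial
  | [_], _ => trivial
  | [_, _], _ => trivial
  | _ :: b :: c :: l, h => ⟨h.1, Tight.left (l := b :: c :: l) h.2⟩

lemma Tight.getElem {n : ℕ} {H : Finset (Finset (Fin n))} :
    ∀ {l : List (Fin n)}, Tight H l → ∀ (i : ℕ) (h : i + 2 < l.length),
      Edge H l[i] l[i + 1] l[i + 2]
  | [], _, _, h => by simp at h
  | [_], _, _, h => by simp at h
  | [_, _], _, _, h => by simp at h
  | _ :: _ :: _ :: _, ht, 0, _ => ht.1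
  | _ :: b :: c :: l, ht, i + 1, h =>
      Tight.getElem (l := b :: c :: l) ht.2 i (by simpa using h)

/-- The quadruple `(a, b, c, d)` absorbs `v`: in a tight path, the segment `a b c d` may be
replaced by `a b v c d`. -/
abbrev Absorbs {n : ℕ} (H : Finset (Finset (Fin n))) (q : Fin n × Fin n × Fin n × Fin n)
    (v : Fin n) : Prop :=
  Edge H q.1 q.2.1 v ∧ Edge H q.2.1 v q.2.2.1 ∧ Edge H v q.2.2.1 q.2.2.2

lemma Tight.insert {n : ℕ} {H : Finset (Finset (Fin n))} {a b c d v : Fin n}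
    {r : List (Fin n)} (hq : Absorbs H (a, b, c, d) v) :
    ∀ {l : List (Fin n)}, Tight H (l ++ a :: b :: c :: d :: r) →
      Tight H (l ++ a :: b :: v :: c :: d :: r)
  | [], h => ⟨hq.1, hq.2.1, hq.2.2, h.2.2⟩
  | [_], h => ⟨h.1, Tight.insert hq (l := []) h.2⟩
  | [_, x], h => ⟨h.1, Tight.insert hq (l := [x]) h.2⟩
  | _ :: x :: y :: l, h => ⟨h.1, Tight.insert hq (l := x :: y :: l) h.2⟩

/-- A block of an absorbing path: a quadruple followed by a list of connecting vertices. -/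
abbrev Block (n : ℕ) : Type := (Fin n × Fin n × Fin n × Fin n) × List (Fin n)

/-- The vertex sequence of a list of blocks. -/
def flat {n : ℕ} : List (Block n) → List (Fin n)
  | [] => []
  | (q, k) :: bs => q.1 :: q.2.1 :: q.2.2.1 :: q.2.2.2 :: (k ++ flat bs)

/-- The vertex sequence of a list of blocks after inserting the vertex `σ q` (if there is one)
in the middle of each quadruple `q`. -/
def flatIns {n : ℕ} (σ : Fin n × Fin n × Fin n × Fin n → Option (Fin n)) :
    List (Block n) → List (Fin n)
  | [] => []
  | (q, k) :: bs =>
      q.1 :: q.2.1 :: ((σ q).toList ++ q.2.2.1 :: q.2.2.2 :: (k ++ flatIns σ bs))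

lemma Tight.flatIns {n : ℕ} {H : Finset (Finset (Fin n))}
    {σ : Fin n × Fin n × Fin n × Fin n → Option (Fin n)}
    (hσ : ∀ q v, σ q = some v → Absorbs H q v) (r : List (Fin n)) :
    ∀ (bs : List (Block n)) (l : List (Fin n)),
      Tight H (l ++ (flat bs ++ r)) → Tight H (l ++ (CherryHam.flatIns σ bs ++ r))
  | [], l, h => h
  | ((a, b, c, d), k) :: bs, l, h => by
      cases hv : σ (a, b, c, d) with
      | none =>
        have := Tight.flatIns hσ r bs (l ++ a :: b :: c :: d :: k) (by simpa [flat] using h)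
        simpa [CherryHam.flatIns, hv] using this
      | some v =>
        have := Tight.flatIns hσ r bs (l ++ a :: b :: v :: c :: d :: k) (by
          simpa using Tight.insert (hσ _ _ hv) (l := l) (r := k ++ (flat bs ++ r))
            (by simpa [flat] using h))
        simpa [CherryHam.flatIns, hv] using this

lemma flatIns_perm {n : ℕ} (σ : Fin n × Fin n × Fin n × Fin n → Option (Fin n)) :
    ∀ bs : List (Block n),
      (flatIns σ bs).Perm (flat bs ++ (bs.map Prod.fst).filterMap σ)
  | [] => by simp [flat, flatIns]
  | ((a, b, c, d), k) :: bs => by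
      have ih := flatIns_perm σ bs
      rw [List.perm_iff_count] at ih ⊢
      intro x
      have := ih x
      cases hv : σ (a, b, c, d) <;>
        simp [flat, flatIns, hv, List.count_cons] at this ⊢ <;> omega

lemma fst_mem_flat {n : ℕ} {q : Fin n × Fin n × Fin n × Fin n} :
    ∀ {bs : List (Block n)}, q ∈ bs.map Prod.fst → q.1 ∈ flat bs
  | [], h => by simp at h
  | (q', k) :: bs, h => by
      rw [List.map_cons, List.mem_cons] at h
      rcases h with h | h
      · simp [flat, h]
      · simp [flat, fst_mem_flat h]

lemma nodup_quads {n : ℕ} :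
    ∀ {bs : List (Block n)}, (flat bs).Nodup → (bs.map Prod.fst).Nodup
  | [], _ => by simp
  | (q, k) :: bs, h => by
      rw [flat, List.nodup_cons] at h
      rw [List.map_cons, List.nodup_cons]
      refine ⟨fun hq => h.1 ?_, nodup_quads ?_⟩
      · have := fst_mem_flat hq
        simp [this]
      · have h2 := h.2
        simp only [List.nodup_cons, List.nodup_append] at h2
        exact h2.2.2.2.2.1

/-- Absorption: if every vertex of `L` is absorbed by at least `|L|` of the blocks, then Hall's
theorem assigns distinct blocks to the vertices of `L`, and all of `L` can be inserted. -/
lemma absorb {n : ℕ} {H : Finset (Finset (Fin n))} (bs : List (Block n))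
    (hnd : (flat bs).Nodup) (L : Finset (Fin n))
    (hL : ∀ v ∈ L, L.card ≤ bs.countP fun B => Absorbs H B.1 v) :
    ∃ l : List (Fin n), l.Perm (flat bs ++ L.toList) ∧
      (∀ r, Tight H (flat bs ++ r) → Tight H (l ++ r)) ∧
      ∀ x y, [x, y] <+: flat bs → [x, y] <+: l := by
  classical
  have hq := nodup_quads hnd
  set Q : Finset (Fin n × Fin n × Fin n × Fin n) := (bs.map Prod.fst).toFinset with hQ
  let t : L → Finset (Fin n × Fin n × Fin n × Fin n) := fun v => Q.filter fun q => Absorbs H q v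
  have ht : ∀ v : L, L.card ≤ (t v).card := by
    intro v
    refine (hL v v.2).trans (le_of_eq ?_)
    have : t v = ((bs.map Prod.fst).filter fun q => Absorbs H q v).toFinset := by
      rw [List.toFinset_filter]; simp [t, hQ]
    rw [this, List.toFinset_card_of_nodup (hq.filter _), ← List.countP_eq_length_filter,
      List.countP_map]
    rfl
  obtain ⟨f, hf, hft⟩ := (Finset.all_card_le_biUnion_card_iff_exists_injective t).1 (by
    intro s
    rcases s.eq_empty_or_nonempty with rfl | ⟨v, hv⟩
    · simp
    · calc s.card ≤ (Finset.univ : Finset L).card := Finset.card_le_univ _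
        _ = L.card := by simp
        _ ≤ (t v).card := ht v
        _ ≤ _ := Finset.card_le_card (Finset.subset_biUnion_of_mem t hv))
  let σ : Fin n × Fin n × Fin n × Fin n → Option (Fin n) := fun q =>
    if h : ∃ v : L, f v = q then some (h.choose : Fin n) else none
  have hσ1 : ∀ q v, σ q = some v → ∃ h : v ∈ L, f ⟨v, h⟩ = q := by
    intro q v h
    by_cases hex : ∃ v : L, f v = q
    · simp only [σ, dif_pos hex, Option.some.injEq] at h
      subst h
      exact ⟨hex.choose.2, hex.choose_spec⟩
    · rw [show σ q = none from dif_neg hex] at h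
      cases h
  have hσ2 : ∀ v : L, σ (f v) = some (v : Fin n) := by
    intro v
    have hex : ∃ w : L, f w = f v := ⟨v, rfl⟩
    simp only [σ, dif_pos hex, Option.some.injEq]
    exact congrArg _ (hf hex.choose_spec)
  have hσ : ∀ q v, σ q = some v → Absorbs H q v := by
    intro q v h
    obtain ⟨hv, rfl⟩ := hσ1 q v h
    have := hft ⟨v, hv⟩
    simp only [t, Finset.mem_filter] at this
    exact this.2
  refine ⟨flatIns σ bs, ?_, fun r h => by simpa using Tight.flatIns hσ r bs [] (by simpa using h), ?_⟩
  · refine (flatIns_perm σ bs).trans (List.Perm.append_left _ ?_)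
    refine (List.perm_ext_iff_of_nodup ?_ (Finset.nodup_toList L)).2 ?_
    · refine hq.filterMap ?_
      intro a a' b h1 h2
      obtain ⟨hb, rfl⟩ := hσ1 _ _ h1
      obtain ⟨hb', rfl⟩ := hσ1 _ _ h2
      rfl
    · intro v
      rw [Finset.mem_toList, List.mem_filterMap]
      constructor
      · rintro ⟨q, _, h⟩
        exact (hσ1 q v h).1
      · intro hv
        refine ⟨f ⟨v, hv⟩, ?_, hσ2 ⟨v, hv⟩⟩
        have := hft ⟨v, hv⟩
        simp only [t, Finset.mem_filter, hQ, List.mem_toFinset] at this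
        exact this.1
  · intro x y h
    match bs, h with
    | [], h => simp [flat] at h
    | (q, k) :: bs, h =>
      simp only [flat, flatIns, List.cons_prefix_cons] at h ⊢
      exact ⟨h.1, h.2.1, by simp⟩

/-- A nodup list through all vertices which is tight even after repeating its first two entries
at the end is a tight Hamilton cycle. -/
lemma hamCycle_of_list {n : ℕ} {H : Finset (Finset (Fin n))} (l : List (Fin n))
    (hnd : l.Nodup) (hall : ∀ v, v ∈ l) (x y : Fin n) (hxy : [x, y] <+: l)
    (ht : Tight H (l ++ [x, y])) : HasTightHamCycle n H := by
  obtain ⟨r, rfl⟩ := hxy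
  set l : List (Fin n) := [x, y] ++ r with hl
  have hlen : l.length = n := by
    have h1 : l.toFinset = Finset.univ := by ext v; simp [hall v]
    have h2 := List.toFinset_card_of_nodup hnd
    rw [h1] at h2
    simpa using h2.symm
  have hn2 : 2 ≤ n := by rw [← hlen, hl]; simp
  have : NeZero n := ⟨by omega⟩
  have hlt : ∀ i : ZMod n, i.val < l.length := fun i => by rw [hlen]; exact ZMod.val_lt i
  refine ⟨fun i => l[i.val]'(hlt i), ⟨?_, ?_⟩, ?_⟩
  · intro i j hij
    exact ZMod.val_injective n ((hnd.getElem_inj_iff).1 hij)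
  · intro v
    obtain ⟨i, hi, rfl⟩ := List.mem_iff_getElem.1 (hall v)
    refine ⟨(i : ZMod n), ?_⟩
    have : (i : ZMod n).val = i := ZMod.val_natCast_of_lt (by omega)
    simp [this]
  · intro i
    have key : ∀ j : ℕ, ∀ hj : j < n + 2, ∀ k : ZMod n, k = (j : ZMod n) →
        (l ++ [x, y])[j]'(by simp [hlen]; omega) = l[k.val]'(hlt k) := by
      rintro j hj k rfl
      rcases lt_or_ge j n with h | h
      · have : (j : ZMod n).val = j := ZMod.val_natCast_of_lt h
        simp [this, List.getElem_append_left (show j < l.length by omega)]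
      · have h3 : (j : ZMod n).val = j - n := by
          have : (j : ZMod n) = ((j - n : ℕ) : ZMod n) := by
            rw [Nat.cast_sub h]; simp
          rw [this]; exact ZMod.val_natCast_of_lt (by omega)
        have h4 : j - n = 0 ∨ j - n = 1 := by omega
        rw [List.getElem_append_right (by omega)]
        simp only [h3, hlen]
        rcases h4 with h4 | h4 <;> simp [h4, hl]
    have hi : i.val < n := ZMod.val_lt i
    have h := ht.getElem i.val (by simp [hlen]; omega)
    rw [key i.val (by omega) i (by simp), key (i.val + 1) (by omega) (i + 1) (by simp),
      key (i.val + 2) (by omega) (i + 2) (by simp)] at h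
    exact h

/-! ### Counting with cherry-density; connecting -/

lemma edge_ne {n : ℕ} {H : Finset (Finset (Fin n))} (H3 : ∀ e ∈ H, e.card = 3) {x y z : Fin n}
    (h : Edge H x y z) : x ≠ y ∧ x ≠ z ∧ y ≠ z := by
  have h3 := H3 _ h
  refine ⟨?_, ?_, ?_⟩ <;> rintro rfl
  · have := Finset.card_le_two (a := x) (b := z)
    simp at h3; omega
  · have := Finset.card_le_two (a := x) (b := y)
    rw [Finset.insert_eq_of_mem (by simp)] at h3
    have := Finset.card_le_two (a := y) (b := x)
    omega
  · have := Finset.card_le_two (a := x) (b := y)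
    simp at h3; omega

lemma edge_swap {n : ℕ} {H : Finset (Finset (Fin n))} {x y z : Fin n} (h : Edge H x y z) :
    Edge H y x z := by
  have : ({y, x, z} : Finset (Fin n)) = {x, y, z} := by ext; simp; tauto
  rw [Edge, this]; exact h

lemma edge_rot {n : ℕ} {H : Finset (Finset (Fin n))} {x y z : Fin n} (h : Edge H x y z) :
    Edge H y z x := by
  have : ({y, z, x} : Finset (Fin n)) = {x, y, z} := by ext; simp; tauto
  rw [Edge, this]; exact h

lemma edge_rev {n : ℕ} {H : Finset (Finset (Fin n))} {x y z : Fin n} (h : Edge H x y z) :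
    Edge H z y x := edge_swap (edge_rot h)

lemma codeg_le {n : ℕ} {H : Finset (Finset (Fin n))} (H3 : ∀ e ∈ H, e.card = 3) {x y : Fin n}
    (hxy : x ≠ y) : codeg n H x y ≤ (univ.filter fun z => Edge H x y z).card := by
  refine (Finset.card_le_card ?_).trans (Finset.card_image_le (f := fun z => ({x, y, z} : Finset (Fin n))))
  intro e he
  rw [Finset.mem_filter] at he
  obtain ⟨heH, hx, hy⟩ := he
  have hsub : ({x, y} : Finset (Fin n)) ⊆ e := by
    intro w hw; simp at hw; rcases hw with rfl | rfl <;> assumption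
  have hc : (e \ {x, y}).card = 1 := by
    rw [Finset.card_sdiff_of_subset hsub, H3 e heH, Finset.card_pair hxy]
  obtain ⟨z, hz⟩ := Finset.card_eq_one.1 hc
  have hee : ({x, y, z} : Finset (Fin n)) = e := by
    rw [← Finset.sdiff_union_of_subset hsub, hz]; ext; simp; tauto
  rw [Finset.mem_image]
  exact ⟨z, by simp only [Finset.mem_filter, Finset.mem_univ, true_and]; rw [Edge, hee]; exact heH, hee⟩

lemma cherry_mono {n : ℕ} {H : Finset (Finset (Fin n))} {ρ ρ' d : ℝ} (h : ρ ≤ ρ')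
    (hc : CherryDense n H ρ d) : CherryDense n H ρ' d := by
  intro G₁ G₂
  have := hc G₁ G₂
  have h2 : ρ * (n : ℝ) ^ 3 ≤ ρ' * (n : ℝ) ^ 3 := by gcongr
  linarith

lemma card_fiber {A B : Type*} [Fintype A] [DecidableEq A] [DecidableEq B]
    (T : Finset (A × B)) (S : Finset B) (h : ∀ t ∈ T, t.2 ∈ S) :
    (T.card : ℝ) = ∑ p ∈ S, ((univ.filter fun x => (x, p) ∈ T).card : ℝ) := by
  rw [Finset.card_eq_sum_card_fiberwise (f := Prod.snd) (t := S) (fun t ht => h t ht)]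
  push_cast
  refine Finset.sum_congr rfl fun p _ => ?_
  congr 1
  refine Finset.card_nbij' (fun t => t.1) (fun x => (x, p)) ?_ ?_ ?_ ?_
  · rintro ⟨x, q⟩ h; simp at h ⊢; obtain ⟨h, rfl⟩ := h; exact h
  · intro x h; simp at h ⊢; exact h
  · rintro ⟨x, q⟩ h; simp at h ⊢; exact h.2.symm
  · intro x _; rfl

/-- Let `G` be a set of pairs such that each `y ∈ Y` is the second coordinate of at least `s n` of
them. Cherry-density bounds the number of pairs `(y, z)`, `y ∈ Y`, for which fewer than half of the
expected number of `(x, y) ∈ G` extend to an edge `xyz`. -/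
lemma few_bad {n : ℕ} {H : Finset (Finset (Fin n))} {ρ d s : ℝ} (hd : 0 < d)
    (hc : CherryDense n H ρ d) (G : Finset (Fin n × Fin n)) (Y : Finset (Fin n))
    (hY : ∀ y ∈ Y, s * n ≤ ((univ.filter fun x => (x, y) ∈ G).card : ℝ)) :
    d * s / 2 * n * ((univ.filter fun p : Fin n × Fin n => p.1 ∈ Y ∧
      ((univ.filter fun x => (x, p.1) ∈ G ∧ Edge H x p.1 p.2).card : ℝ) < d * s / 2 * n).card : ℝ)
      ≤ ρ * n ^ 3 := by
  set B := univ.filter fun p : Fin n × Fin n => p.1 ∈ Y ∧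
      ((univ.filter fun x => (x, p.1) ∈ G ∧ Edge H x p.1 p.2).card : ℝ) < d * s / 2 * n with hB
  have h := hc G B
  set T := ((Finset.univ : Finset (Fin n × Fin n × Fin n)).filter fun t =>
          (t.1, t.2.1) ∈ G ∧ (t.2.1, t.2.2) ∈ B) with hT
  have h1 : ((T.filter fun t => ({t.1, t.2.1, t.2.2} : Finset (Fin n)) ∈ H).card : ℝ)
      ≤ d * s / 2 * n * B.card := by
    rw [card_fiber _ B (by intro t ht; simp [hT] at ht; exact ht.1.2)]
    calc _ ≤ ∑ p ∈ B, d * s / 2 * n := by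
          refine Finset.sum_le_sum fun p hp => ?_
          have h2 : p ∈ B := hp
          rw [hB, Finset.mem_filter] at h2
          refine le_trans ?_ h2.2.2.le
          norm_cast
          refine Finset.card_le_card fun x hx => ?_
          simp [hT] at hx ⊢
          exact ⟨hx.1.1, hx.2⟩
      _ = _ := by rw [Finset.sum_const, nsmul_eq_mul]; ring
  have h2 : s * n * B.card ≤ (T.card : ℝ) := by
    rw [card_fiber _ B (by intro t ht; simp [hT] at ht; exact ht.2)]
    calc _ = ∑ p ∈ B, s * n := by rw [Finset.sum_const, nsmul_eq_mul]; ring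
      _ ≤ _ := by
          refine Finset.sum_le_sum fun p hp => ?_
          have h2 : p ∈ B := hp
          rw [hB, Finset.mem_filter] at h2
          refine (hY _ h2.2.1).trans ?_
          norm_cast
          refine Finset.card_le_card fun x hx => ?_
          simp [hT] at hx ⊢
          exact ⟨hx, hp⟩
  have h3 := mul_le_mul_of_nonneg_left h2 hd.le
  nlinarith

/-- Double counting: if every `x ∈ S` is `P`-related to at least `t` elements of `T`, then at
least `t - h |T| / |S|` elements of `T` are heavy, that is, related to at least `h` elements
of `S`. -/
lemma heavy {A B : Type*} [DecidableEq A] [DecidableEq B] (P : A → B → Prop)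
    [∀ x y, Decidable (P x y)] (S : Finset A) (T : Finset B) (t h : ℝ) (hh : 0 ≤ h)
    (hS : ∀ x ∈ S, t ≤ ((T.filter fun y => P x y).card : ℝ)) :
    t * S.card ≤ ((T.filter fun y => h ≤ ((S.filter fun x => P x y).card : ℝ)).card : ℝ) * S.card
      + h * T.card := by
  have h1 : t * S.card ≤ ∑ x ∈ S, ((T.filter fun y => P x y).card : ℝ) := by
    calc t * S.card = ∑ x ∈ S, t := by rw [Finset.sum_const, nsmul_eq_mul]; ring
      _ ≤ _ := Finset.sum_le_sum hS
  have h2 : ∑ x ∈ S, ((T.filter fun y => P x y).card : ℝ) =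
      ∑ y ∈ T, ((S.filter fun x => P x y).card : ℝ) := by
    have := Finset.sum_card_bipartiteAbove_eq_sum_card_bipartiteBelow (s := S) (t := T) P
    exact_mod_cast this
  rw [h2] at h1
  refine h1.trans ?_
  rw [← Finset.sum_filter_add_sum_filter_not T
    (fun y => h ≤ ((S.filter fun x => P x y).card : ℝ))]
  refine add_le_add ?_ ?_
  · rw [← nsmul_eq_mul, ← Finset.sum_const]
    refine Finset.sum_le_sum fun y _ => ?_
    exact_mod_cast Finset.card_filter_le _ _
  · calc _ ≤ ∑ y ∈ T.filter (fun y => ¬ h ≤ ((S.filter fun x => P x y).card : ℝ)), h := by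
          refine Finset.sum_le_sum fun y hy => ?_
          exact (not_le.1 (Finset.mem_filter.1 hy).2).le
      _ = h * ((T.filter (fun y => ¬ h ≤ ((S.filter fun x => P x y).card : ℝ))).card : ℝ) := by
          rw [Finset.sum_const, nsmul_eq_mul]; ring
      _ ≤ _ := by gcongr; exact Finset.filter_subset _ _

/-- Every pair of distinct vertices has at least `b` common neighbours inside `W`. -/
def CodegIn {n : ℕ} (H : Finset (Finset (Fin n))) (W : Finset (Fin n)) (b : ℝ) : Prop :=
  ∀ x y : Fin n, x ≠ y → b ≤ ((W.filter fun z => Edge H x y z).card : ℝ)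

lemma CodegIn.sdiff {n : ℕ} {H : Finset (Finset (Fin n))} {W F : Finset (Fin n)} {b b' : ℝ}
    (h : CodegIn H W b) (hF : b' + ((W ∩ F).card : ℝ) ≤ b) : CodegIn H (W \ F) b' := by
  intro x y hxy
  have h1 := h x y hxy
  have h2 : (W.filter fun z => Edge H x y z).card ≤
      ((W \ F).filter fun z => Edge H x y z).card + (W ∩ F).card := by
    refine (Finset.card_le_card ?_).trans (Finset.card_union_le _ _)
    intro z hz
    simp at hz ⊢
    tauto
  have h3 : ((W.filter fun z => Edge H x y z).card : ℝ) ≤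
      (((W \ F).filter fun z => Edge H x y z).card : ℝ) + ((W ∩ F).card : ℝ) := by exact_mod_cast h2
  linarith

/-- From a pair `(a, b)` one reaches linearly many vertices `y`, and almost all pairs `(y, z)` with
such `y`, by linearly many tight paths `a b x y z`. -/
lemma reach {n : ℕ} {H : Finset (Finset (Fin n))} {ρ d β : ℝ} (H3 : ∀ e ∈ H, e.card = 3)
    (hn : 0 < n) (hd : 0 < d) (hβ : 0 < β) (hc : CherryDense n H ρ d) {W : Finset (Fin n)}
    (hW : CodegIn H W (β * n)) {a b : Fin n} (hab : a ≠ b) :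
    ∃ (Y : Finset (Fin n)) (B : Finset (Fin n × Fin n)), Y ⊆ W ∧ β ^ 2 / 2 * n ≤ (Y.card : ℝ) ∧
      d * (β ^ 2 / 2) / 2 * n * (B.card : ℝ) ≤ ρ * n ^ 3 ∧
      ∀ y ∈ Y, ∀ z, (y, z) ∉ B → d * (β ^ 2 / 2) / 2 * n ≤
        ((W.filter fun x => Edge H a b x ∧ Edge H b x y ∧ Edge H x y z).card : ℝ) := by
  have hn' : (0 : ℝ) < n := by exact_mod_cast hn
  set X := W.filter fun x => Edge H a b x with hX
  set Y := W.filter fun y => β ^ 2 / 2 * n ≤ ((X.filter fun x => Edge H b x y).card : ℝ) with hY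
  set G : Finset (Fin n × Fin n) := univ.filter fun p => p.1 ∈ X ∧ Edge H b p.1 p.2 with hG
  have hXc : β * n ≤ (X.card : ℝ) := hW a b hab
  have hcard : ∀ S : Finset (Fin n), S.card ≤ n := fun S =>
    (Finset.card_le_univ S).trans (by simp)
  have hhv := heavy (fun x y => Edge H b x y) X W (β * n) (β ^ 2 / 2 * n) (by positivity) (by
    intro x hx
    rw [hX, Finset.mem_filter] at hx
    exact hW b x (edge_ne H3 hx.2).2.2)
  have hB := few_bad (s := β ^ 2 / 2) hd hc G Y (by
    intro y hy
    rw [hY, Finset.mem_filter] at hy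
    refine hy.2.trans ?_
    norm_cast
    refine Finset.card_le_card fun x hx => ?_
    simpa [hG] using hx)
  refine ⟨Y, _, Finset.filter_subset _ _, ?_, hB, ?_⟩
  · have h1 : β ^ 2 / 2 * n * (W.card : ℝ) ≤ β ^ 2 / 2 * n * n := by gcongr; exact hcard W
    have h2 : (Y.card : ℝ) * X.card ≤ Y.card * n := by gcongr; exact hcard X
    have h3 : β * n * (β * n) ≤ β * n * X.card := by gcongr
    have h4 : β ^ 2 / 2 * n * n ≤ Y.card * n := by
      have := hhv
      rw [← hY] at this
      nlinarith
    exact le_of_mul_le_mul_right h4 hn'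
  · intro y hy z hyz
    simp only [Finset.mem_filter, Finset.mem_univ, true_and, not_and, not_lt] at hyz
    refine (hyz hy).trans ?_
    norm_cast
    refine Finset.card_le_card fun x hx => ?_
    simp [hG, hX] at hx ⊢
    tauto

/-- Connecting lemma: any two pairs are joined by a tight path whose five inner vertices lie in a
prescribed set `W` into which all codegrees are linear. -/
lemma connect (d β : ℝ) (hd : 0 < d) (hβ : 0 < β) :
    ∃ ρ : ℝ, 0 < ρ ∧ ∃ n₀ : ℕ, ∀ n, n₀ ≤ n → ∀ H : Finset (Finset (Fin n)),
      (∀ e ∈ H, e.card = 3) → CherryDense n H ρ d → ∀ W, CodegIn H W (β * n) →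
      ∀ a b c e : Fin n, a ≠ b → c ≠ e → ∃ k : List (Fin n), k.length = 5 ∧ k.Nodup ∧
        (∀ x ∈ k, x ∈ W) ∧ Tight H (a :: b :: (k ++ [c, e])) := by
  set s := β ^ 2 / 2 with hs
  have hs0 : 0 < s := by positivity
  set τ := d * s / 2 with hτ
  have hτ0 : 0 < τ := by positivity
  set ρ := d * (s ^ 2 * β) / (2 * (2 * d / τ + 1)) with hρ
  have hρ0 : 0 < ρ := by positivity
  have hkey : d * (s ^ 2 * β - 2 * (ρ / τ)) - ρ > 0 := by
    have : d * (2 * (ρ / τ)) + ρ = d * (s ^ 2 * β) / 2 := by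
      have h1 : d * (2 * (ρ / τ)) + ρ = ρ * (2 * d / τ + 1) := by ring
      rw [h1, hρ]; field_simp
    have : 0 < d * (s ^ 2 * β) := by positivity
    nlinarith
  refine ⟨ρ, hρ0, ⌈3 / τ⌉₊ + 1, ?_⟩
  intro n hn H H3 hc W hW a b c e hab hce
  have hn0 : 0 < n := by omega
  have hn' : (0 : ℝ) < n := by exact_mod_cast hn0
  have hτn : 3 ≤ τ * n := by
    have h1 : 3 / τ ≤ n := (Nat.le_ceil _).trans (by exact_mod_cast (by omega : ⌈3 / τ⌉₊ ≤ n))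
    rw [div_le_iff₀ hτ0] at h1; linarith
  obtain ⟨Y, B, hYW, hY, hB, hYB⟩ := reach H3 hn0 hd hβ hc hW hab
  obtain ⟨Y', B', hYW', hY', hB', hYB'⟩ := reach H3 hn0 hd hβ hc hW hce.symm
  have hWc : β * n ≤ (W.card : ℝ) :=
    (hW a b hab).trans (by exact_mod_cast Finset.card_filter_le _ _)
  have hBle : ∀ b : ℝ, τ * n * b ≤ ρ * n ^ 3 → b ≤ ρ / τ * n ^ 2 := by
    intro b hb
    rw [div_mul_eq_mul_div, le_div_iff₀ hτ0]
    have : (b * τ) * n ≤ (ρ * n ^ 2) * n := by nlinarith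
    exact le_of_mul_le_mul_right this hn'
  have hBc := hBle _ hB
  have hBc' := hBle _ hB'
  set G₁ : Finset (Fin n × Fin n) :=
    univ.filter fun p => p.1 ∈ Y ∧ p.2 ∈ W ∧ p ∉ B with hG₁
  set G₂ : Finset (Fin n × Fin n) :=
    univ.filter fun p => p.2 ∈ Y' ∧ (p.2, p.1) ∉ B' with hG₂
  have h := hc G₁ G₂
  set T := ((Finset.univ : Finset (Fin n × Fin n × Fin n)).filter fun t =>
          (t.1, t.2.1) ∈ G₁ ∧ (t.2.1, t.2.2) ∈ G₂) with hT
  have hTc : Y.card * (W.card * Y'.card) ≤ T.card + (B.card * n + B'.card * n) := by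
    have e1 : (univ.filter fun t : Fin n × Fin n × Fin n => (t.1, t.2.1) ∈ B).card
        ≤ B.card * n := by
      have : B.card * n = (B ×ˢ (univ : Finset (Fin n))).card := by simp
      rw [this]
      refine Finset.card_le_card_of_injOn (fun t => ((t.1, t.2.1), t.2.2)) ?_ ?_
      · intro t ht; simpa using ht
      · rintro ⟨_, _, _⟩ _ ⟨_, _, _⟩ _ h; simp at h ⊢; tauto
    have e2 : (univ.filter fun t : Fin n × Fin n × Fin n => (t.2.2, t.2.1) ∈ B').card
        ≤ B'.card * n := by
      have : B'.card * n = (B' ×ˢ (univ : Finset (Fin n))).card := by simp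
      rw [this]
      refine Finset.card_le_card_of_injOn (fun t => ((t.2.2, t.2.1), t.1)) ?_ ?_
      · intro t ht; simpa using ht
      · rintro ⟨_, _, _⟩ _ ⟨_, _, _⟩ _ h; simp at h ⊢; tauto
    rw [← Finset.card_product W Y', ← Finset.card_product Y]
    refine le_trans (Finset.card_le_card ?_) (le_trans (Finset.card_union_le T _)
      (Nat.add_le_add_left ((Finset.card_union_le _ _).trans (Nat.add_le_add e1 e2)) _))
    rintro ⟨x, y, z⟩ ht
    simp [hT, hG₁, hG₂] at ht ⊢
    tauto
  have hTc' : (Y.card : ℝ) * (W.card * Y'.card) ≤ T.card + (B.card * n + B'.card * n) := by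
    exact_mod_cast hTc
  have hprod : (s * n) * ((β * n) * (s * n)) ≤ (Y.card : ℝ) * (W.card * Y'.card) := by
    gcongr
  have hT2 : (s ^ 2 * β - 2 * (ρ / τ)) * n ^ 3 ≤ (T.card : ℝ) := by
    have h1 : (B.card : ℝ) * n ≤ ρ / τ * n ^ 2 * n := by gcongr
    have h2 : (B'.card : ℝ) * n ≤ ρ / τ * n ^ 2 * n := by gcongr
    nlinarith
  have hpos : (0 : ℝ) <
      ((T.filter fun t => ({t.1, t.2.1, t.2.2} : Finset (Fin n)) ∈ H).card : ℝ) := by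
    have h1 := mul_le_mul_of_nonneg_left hT2 hd.le
    have h2 : 0 < (d * (s ^ 2 * β - 2 * (ρ / τ)) - ρ) * (n : ℝ) ^ 3 := by positivity
    nlinarith
  have hne : (T.filter fun t => ({t.1, t.2.1, t.2.2} : Finset (Fin n)) ∈ H).Nonempty :=
    Finset.card_pos.1 (by exact_mod_cast hpos)
  obtain ⟨⟨y, z, w⟩, ht⟩ := hne
  simp [hT, hG₁, hG₂] at ht
  obtain ⟨⟨⟨hyY, hzW, hyz⟩, hwY, hwz⟩, hyzw⟩ := ht
  have hx : τ * n ≤ _ := hYB y hyY z hyz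
  have hv : τ * n ≤ _ := hYB' w hwY z hwz
  obtain ⟨x, hx, hxw⟩ := Finset.exists_mem_notMem_of_card_lt_card
    (s := {w}) (t := W.filter fun x => Edge H a b x ∧ Edge H b x y ∧ Edge H x y z) (by
      have : (1 : ℝ) < ((W.filter fun x => Edge H a b x ∧ Edge H b x y ∧ Edge H x y z).card : ℝ) := by
        linarith
      rw [Finset.card_singleton]; exact_mod_cast this)
  obtain ⟨v, hv, hvxy⟩ := Finset.exists_mem_notMem_of_card_lt_card
    (s := {x, y}) (t := W.filter fun v => Edge H e c v ∧ Edge H c v w ∧ Edge H v w z) (by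
      have : (2 : ℝ) < ((W.filter fun v => Edge H e c v ∧ Edge H c v w ∧ Edge H v w z).card : ℝ) := by
        linarith
      exact lt_of_le_of_lt Finset.card_le_two (by exact_mod_cast this))
  rw [Finset.mem_filter] at hx hv
  obtain ⟨hxW, habx, hbxy, hxyz⟩ := hx
  obtain ⟨hvW, hecv, hcvw, hvwz⟩ := hv
  simp at hxw hvxy
  have n1 := edge_ne H3 hxyz
  have n2 := edge_ne H3 (x := y) (y := z) (z := w) hyzw
  have n3 := edge_ne H3 hvwz
  refine ⟨[x, y, z, w, v], rfl, ?_, ?_, ?_⟩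
  · simp only [List.nodup_cons, List.mem_cons, List.not_mem_nil, or_false, not_or]
    simp
    refine ⟨⟨n1.1, n1.2.1, hxw, fun h => hvxy.1 h.symm⟩, ⟨n2.1, n2.2.1, fun h => hvxy.2 h.symm⟩,
      ⟨n2.2.2, n3.2.1.symm⟩, n3.1.symm⟩
  · intro u hu
    simp at hu
    rcases hu with rfl | rfl | rfl | rfl | rfl
    exacts [hxW, hYW hyY, hzW, hYW' hwY, hvW]
  · exact ⟨habx, hbxy, hxyz, hyzw, edge_rev hvwz, edge_rev hcvw, edge_rev hecv, trivial⟩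

/-! ### Absorbers, paths of constant length and greedy selection -/

/-- Every vertex `v` has at least `γ n⁴` absorbing quadruples inside a set `W` into which all
codegrees are linear: apply `few_bad` to the link graph of `v`. -/
lemma many_absorbers (d β : ℝ) (hd : 0 < d) (hβ : 0 < β) :
    ∃ ρ : ℝ, 0 < ρ ∧ ∃ γ : ℝ, 0 < γ ∧ ∃ n₀ : ℕ, ∀ n, n₀ ≤ n →
      ∀ H : Finset (Finset (Fin n)),
      (∀ e ∈ H, e.card = 3) → CherryDense n H ρ d → ∀ W, CodegIn H W (β * n) → ∀ v : Fin n,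
      γ * n ^ 4 ≤ ((univ.filter fun q : Fin n × Fin n × Fin n × Fin n =>
        (q.1 ∈ W ∧ q.2.1 ∈ W ∧ q.2.2.1 ∈ W ∧ q.2.2.2 ∈ W ∧
          [q.1, q.2.1, q.2.2.1, q.2.2.2].Nodup ∧ Edge H q.1 q.2.1 q.2.2.1 ∧
          Edge H q.2.1 q.2.2.1 q.2.2.2) ∧ Absorbs H q v).card : ℝ) := by
  set τ := d * β / 2 with hτ
  have hτ0 : 0 < τ := by positivity
  refine ⟨β ^ 2 * τ / 8, by positivity, β ^ 2 / 4 * (τ * (τ / 2)), by positivity,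
    ⌈2 / β⌉₊ + ⌈2 / τ⌉₊ + 1, ?_⟩
  intro n hn H H3 hc W hW v
  have hn0 : 0 < n := by omega
  have hn' : (0 : ℝ) < n := by exact_mod_cast hn0
  have hτn : 2 ≤ τ * n := by
    have h1 : 2 / τ ≤ n := (Nat.le_ceil _).trans (by exact_mod_cast (by omega : ⌈2 / τ⌉₊ ≤ n))
    rw [div_le_iff₀ hτ0] at h1; linarith
  have hβn : 2 ≤ β * n := by
    have h1 : 2 / β ≤ n := (Nat.le_ceil _).trans (by exact_mod_cast (by omega : ⌈2 / β⌉₊ ≤ n))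
    rw [div_le_iff₀ hβ] at h1; linarith
  set G : Finset (Fin n × Fin n) := univ.filter fun p => p.1 ∈ W ∧ Edge H p.1 p.2 v with hG
  have hB := few_bad (s := β) hd hc G (W.erase v) (by
    intro y hy
    refine (hW y v (Finset.ne_of_mem_erase hy)).trans ?_
    norm_cast
    refine Finset.card_le_card fun x hx => ?_
    simp [hG] at hx ⊢
    exact ⟨hx.1, edge_rot (edge_rot hx.2)⟩)
  set B := univ.filter fun p : Fin n × Fin n => p.1 ∈ W.erase v ∧
      ((univ.filter fun x => (x, p.1) ∈ G ∧ Edge H x p.1 p.2).card : ℝ) < d * β / 2 * n with hBdef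
  have hBc : (B.card : ℝ) ≤ β ^ 2 / 8 * n ^ 2 := by
    have h1 : (B.card : ℝ) * (τ * n) ≤ (β ^ 2 / 8 * n ^ 2) * (τ * n) := by
      rw [← hτ] at hB; nlinarith
    exact le_of_mul_le_mul_right h1 (by positivity)
  -- pairs in the link of `v`, and the good ones among them
  set L := (W.erase v).sigma fun b => W.filter fun c => Edge H b v c with hL
  have hLc : (β * n / 2) * (β * n) ≤ (L.card : ℝ) := by
    rw [hL, Finset.card_sigma]
    push_cast
    calc (β * n / 2) * (β * n) ≤ ((W.erase v).card : ℝ) * (β * n) := by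
          gcongr
          have h1 : β * n ≤ (W.card : ℝ) := by
            by_cases h : ∃ u, u ≠ v
            · obtain ⟨u, hu⟩ := h
              exact (hW u v hu).trans (by exact_mod_cast Finset.card_filter_le _ _)
            · push Not at h
              have : (⟨0, hn0⟩ : Fin n) = v := h _
              by_cases hn2 : 1 < n
              · have h3 := h ⟨1, hn2⟩
                rw [← this] at h3
                simp at h3
              · exfalso
                have : 0 < ⌈2 / β⌉₊ := Nat.ceil_pos.2 (by positivity)
                omega
          have h2 : (W.card : ℝ) - 1 ≤ ((W.erase v).card : ℝ) := by
            have := Finset.pred_card_le_card_erase (s := W) (a := v)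
            have h3 : W.card ≤ (W.erase v).card + 1 := by omega
            have h4 : (W.card : ℝ) ≤ (W.erase v).card + 1 := by exact_mod_cast h3
            linarith
          linarith
      _ = ∑ b ∈ W.erase v, β * n := by rw [Finset.sum_const, nsmul_eq_mul]
      _ ≤ _ := Finset.sum_le_sum fun b hb => hW b v (Finset.ne_of_mem_erase hb)
  set D := L.filter fun p => (p.1, p.2) ∉ B ∧ (p.2, p.1) ∉ B with hD
  have hDc : β ^ 2 / 4 * n ^ 2 ≤ (D.card : ℝ) := by
    have h1 : L.card ≤ D.card + (B.card + B.card) := by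
      have e1 : (L.filter fun p => (p.1, p.2) ∈ B).card ≤ B.card := by
        refine Finset.card_le_card_of_injOn (fun p => (p.1, p.2)) ?_ ?_
        · intro p hp; simp at hp ⊢; exact hp.2
        · rintro ⟨_, _⟩ _ ⟨_, _⟩ _ h; simp at h ⊢; tauto
      have e2 : (L.filter fun p => (p.2, p.1) ∈ B).card ≤ B.card := by
        refine Finset.card_le_card_of_injOn (fun p => (p.2, p.1)) ?_ ?_
        · intro p hp; simp at hp ⊢; exact hp.2
        · rintro ⟨_, _⟩ _ ⟨_, _⟩ _ h; simp at h ⊢; tauto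
      refine le_trans (Finset.card_le_card ?_) (le_trans (Finset.card_union_le D _)
        (Nat.add_le_add_left ((Finset.card_union_le _ _).trans (Nat.add_le_add e1 e2)) _))
      intro p hp
      simp only [hD, Finset.mem_union, Finset.mem_filter]
      tauto
    have h2 : (L.card : ℝ) ≤ D.card + (B.card + B.card) := by exact_mod_cast h1
    nlinarith
  let A : Fin n → Fin n → Finset (Fin n) := fun b c =>
    W.filter fun a => Edge H a b v ∧ Edge H a b c
  have hA : ∀ b c, b ∈ W.erase v → (b, c) ∉ B → τ * n ≤ ((A b c).card : ℝ) := by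
    intro b c hb hbc
    simp only [hBdef, Finset.mem_filter, Finset.mem_univ, true_and, not_and, not_lt] at hbc
    refine (hbc hb).trans ?_
    norm_cast
    refine Finset.card_le_card fun x hx => ?_
    simp [hG, A] at hx ⊢
    tauto
  set Z := D.sigma fun p => (A p.1 p.2).sigma fun a => (A p.2 p.1).erase a with hZ
  have hZc : β ^ 2 / 4 * n ^ 2 * (τ * n * (τ * n / 2)) ≤ (Z.card : ℝ) := by
    rw [hZ, Finset.card_sigma]
    push_cast
    calc β ^ 2 / 4 * n ^ 2 * (τ * n * (τ * n / 2)) ≤ D.card * (τ * n * (τ * n / 2)) := by gcongr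
      _ = ∑ p ∈ D, τ * n * (τ * n / 2) := by rw [Finset.sum_const, nsmul_eq_mul]
      _ ≤ _ := by
        refine Finset.sum_le_sum fun p hp => ?_
        simp only [hD, hL, Finset.mem_filter, Finset.mem_sigma] at hp
        obtain ⟨⟨hb, hcW, hbc⟩, h1, h2⟩ := hp
        have hcv : p.2 ∈ W.erase v :=
          Finset.mem_erase.2 ⟨(edge_ne H3 hbc).2.2.symm, hcW⟩
        rw [Finset.card_sigma]
        push_cast
        calc τ * n * (τ * n / 2) ≤ (A p.1 p.2).card * (τ * n / 2) := by
              gcongr; exact hA _ _ hb h1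
          _ = ∑ a ∈ A p.1 p.2, τ * n / 2 := by rw [Finset.sum_const, nsmul_eq_mul]
          _ ≤ _ := by
            refine Finset.sum_le_sum fun a _ => ?_
            have h3 := hA _ _ hcv h2
            have h4 := Finset.pred_card_le_card_erase (s := A p.2 p.1) (a := a)
            have h5 : (A p.2 p.1).card ≤ ((A p.2 p.1).erase a).card + 1 := by omega
            have h6 : ((A p.2 p.1).card : ℝ) ≤ ((A p.2 p.1).erase a).card + 1 := by
              exact_mod_cast h5
            linarith
  calc β ^ 2 / 4 * (τ * (τ / 2)) * (n : ℝ) ^ 4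
      = β ^ 2 / 4 * n ^ 2 * (τ * n * (τ * n / 2)) := by ring
    _ ≤ (Z.card : ℝ) := hZc
    _ ≤ _ := by
      norm_cast
      refine Finset.card_le_card_of_injOn (fun z => (z.2.1, z.1.1, z.1.2, z.2.2)) ?_ ?_
      · rintro ⟨⟨b, c⟩, a, e⟩ hz
        simp [hZ, hD, hL, A] at hz
        obtain ⟨⟨⟨⟨hbv, hbW⟩, hcW, hbvc⟩, -⟩, ⟨haW, habv, habc⟩, ⟨heW, hecv, hecb⟩, hea⟩ := hz
        have n1 := edge_ne H3 habc
        have n2 := edge_ne H3 hecb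
        simp
        exact ⟨⟨haW, hbW, hcW, heW, ⟨⟨n1.1, n1.2.1, fun h => hea h.symm⟩,
          ⟨n1.2.2, n2.2.1.symm⟩, n2.1.symm⟩, habc, edge_rev hecb⟩, habv, hbvc, edge_rev hecv⟩
      · rintro ⟨⟨b, c⟩, a, e⟩ _ ⟨⟨b', c'⟩, a', e'⟩ _ h
        simp at h ⊢
        tauto

/-- A nonempty subfamily in which every shadow set is covered by at least `t` members,
obtained from a family with many members by maximising `|E'| - t * |∂E'|`. -/
lemma exists_dense_subfamily {n : ℕ} (E : Finset (Finset (Fin n))) (t : ℝ)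
    (hE : t * (E.shadow.card : ℝ) < E.card) :
    ∃ E' ⊆ E, E'.Nonempty ∧
      ∀ s ∈ E'.shadow, t ≤ ((E'.filter fun e => s ⊆ e).card : ℝ) := by
  obtain ⟨E', hE', hmax⟩ := Finset.exists_max_image E.powerset
    (fun F => (F.card : ℝ) - t * F.shadow.card) ⟨E, Finset.mem_powerset_self E⟩
  rw [Finset.mem_powerset] at hE'
  refine ⟨E', hE', ?_, ?_⟩
  · rw [Finset.nonempty_iff_ne_empty]
    rintro rfl
    have := hmax E (Finset.mem_powerset_self E)
    simp at this
    linarith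
  · intro s hs
    by_contra! hlt
    have h1 := hmax (E'.filter fun e => ¬ s ⊆ e)
      (Finset.mem_powerset.2 ((Finset.filter_subset _ _).trans hE'))
    have h2 : (E'.filter fun e => s ⊆ e).card + (E'.filter fun e => ¬ s ⊆ e).card = E'.card :=
      Finset.card_filter_add_card_filter_not _
    have h3 : (E'.filter fun e => ¬ s ⊆ e).shadow.card + 1 ≤ E'.shadow.card := by
      rw [← Finset.card_erase_add_one hs]
      refine Nat.add_le_add_right (Finset.card_le_card ?_) 1
      intro u hu
      refine Finset.mem_erase.2 ⟨?_, Finset.shadow_mono (Finset.filter_subset _ _) hu⟩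
      rintro rfl
      obtain ⟨e, he, a, ha, hae⟩ := Finset.mem_shadow_iff.1 hu
      exact (Finset.mem_filter.1 he).2 (hae ▸ Finset.erase_subset _ _)
    have h2' : ((E'.filter fun e => s ⊆ e).card : ℝ) + (E'.filter fun e => ¬ s ⊆ e).card
      = E'.card := by exact_mod_cast h2
    have h3' : ((E'.filter fun e => ¬ s ⊆ e).shadow.card : ℝ) + 1 ≤ E'.shadow.card := by
      exact_mod_cast h3
    have ht : 0 ≤ t := by
      have : (0 : ℝ) ≤ ((E'.filter fun e => s ⊆ e).card : ℝ) := by positivity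
      linarith
    have h4 := mul_le_mul_of_nonneg_left h3' ht
    linarith

/-- Every linear-size vertex set spans a tight path on any prescribed constant number of
vertices. -/
lemma long_path (d ε : ℝ) (hd : 0 < d) (hε : 0 < ε) (K : ℕ) :
    ∃ ρ : ℝ, 0 < ρ ∧ ∃ n₀ : ℕ, ∀ n, n₀ ≤ n → ∀ H : Finset (Finset (Fin n)),
      (∀ e ∈ H, e.card = 3) → CherryDense n H ρ d → ∀ U : Finset (Fin n), ε * n ≤ (U.card : ℝ) →
      ∃ l : List (Fin n), l.length = K + 2 ∧ l.Nodup ∧ (∀ x ∈ l, x ∈ U) ∧ Tight H l := by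
  set δ := d * ε ^ 3 / 108 with hδ
  have hδ0 : 0 < δ := by positivity
  refine ⟨d * ε ^ 3 / 2, by positivity, ⌈(K + 2) / δ⌉₊ + 1, ?_⟩
  intro n hn H H3 hc U hU
  have hn0 : 0 < n := by omega
  have hn' : (0 : ℝ) < n := by exact_mod_cast hn0
  have hδn : K + 2 ≤ δ * n := by
    have h1 : (K + 2) / δ ≤ n :=
      (Nat.le_ceil _).trans (by exact_mod_cast (by omega : ⌈((K : ℝ) + 2) / δ⌉₊ ≤ n))
    rw [div_le_iff₀ hδ0] at h1; linarith
  set E := H.filter fun e => e ⊆ U with hE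
  have hEc : d * ε ^ 3 / 54 * n ^ 3 ≤ (E.card : ℝ) := by
    have h := hc (U ×ˢ U) (U ×ˢ U)
    set T := ((Finset.univ : Finset (Fin n × Fin n × Fin n)).filter fun t =>
          (t.1, t.2.1) ∈ U ×ˢ U ∧ (t.2.1, t.2.2) ∈ U ×ˢ U) with hT
    have hTU : T = U ×ˢ (U ×ˢ U) := by
      ext ⟨x, y, z⟩; simp [hT]; tauto
    have hTc : (ε * n) ^ 3 ≤ (T.card : ℝ) := by
      rw [hTU, Finset.card_product, Finset.card_product]
      push_cast
      calc (ε * n) ^ 3 ≤ (U.card : ℝ) ^ 3 := by gcongr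
        _ = _ := by ring
    have h27 : (T.filter fun t => ({t.1, t.2.1, t.2.2} : Finset (Fin n)) ∈ H).card ≤ 27 * E.card := by
      refine Finset.card_le_mul_card_image_of_maps_to
        (f := fun t => ({t.1, t.2.1, t.2.2} : Finset (Fin n))) ?_ 27 ?_
      · rintro ⟨x, y, z⟩ ht
        simp [hTU] at ht
        simp only [hE, Finset.mem_filter]
        refine ⟨ht.2, ?_⟩
        intro w hw; simp at hw; rcases hw with rfl | rfl | rfl <;> tauto
      · intro e he
        have h3 := H3 e (Finset.mem_filter.1 he).1
        calc _ ≤ (e ×ˢ (e ×ˢ e)).card := by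
              refine Finset.card_le_card ?_
              rintro ⟨x, y, z⟩ ht
              simp at ht
              obtain ⟨_, rfl⟩ := ht
              simp
          _ = 27 := by rw [Finset.card_product, Finset.card_product, h3]
    have h27' : ((T.filter fun t => ({t.1, t.2.1, t.2.2} : Finset (Fin n)) ∈ H).card : ℝ)
        ≤ 27 * E.card := by exact_mod_cast h27
    have h5 := mul_le_mul_of_nonneg_left hTc hd.le
    nlinarith
  have hsh : (E.shadow.card : ℝ) ≤ n ^ 2 := by
    have h1 : E.shadow ⊆ (univ : Finset (Fin n × Fin n)).image fun p => {p.1, p.2} := by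
      intro s hs
      obtain ⟨e, he, a, ha, rfl⟩ := Finset.mem_shadow_iff.1 hs
      have h2 : (e.erase a).card = 2 := by
        rw [Finset.card_erase_of_mem ha, H3 e (Finset.mem_filter.1 he).1]
      obtain ⟨x, y, _, hxy⟩ := Finset.card_eq_two.1 h2
      rw [Finset.mem_image]
      exact ⟨(x, y), by simp, hxy.symm⟩
    have h2 := (Finset.card_le_card h1).trans Finset.card_image_le
    have h3 : E.shadow.card ≤ n ^ 2 := by simpa [sq] using h2
    exact_mod_cast h3
  obtain ⟨E', hE', ⟨e₀, he₀⟩, hdeg⟩ := exists_dense_subfamily E (δ * n) (by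
    have h1 : δ * n * (E.shadow.card : ℝ) ≤ δ * n * n ^ 2 := by gcongr
    have h2 : 0 < δ * (n : ℝ) ^ 3 := by positivity
    have h3 : d * ε ^ 3 / 54 = 2 * δ := by rw [hδ]; ring
    rw [h3] at hEc
    nlinarith)
  have hE3 : ∀ e ∈ E', e.card = 3 ∧ e ⊆ U ∧ e ∈ H := fun e he => by
    have := Finset.mem_filter.1 (hE' he)
    exact ⟨H3 e this.1, this.2, this.1⟩
  have main : ∀ k : ℕ, k ≤ K → ∃ (x y : Fin n) (l : List (Fin n)), l.length = k ∧
      (x :: y :: l).Nodup ∧ (∀ z ∈ x :: y :: l, z ∈ U) ∧ Tight H (x :: y :: l) ∧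
      ({x, y} : Finset (Fin n)) ∈ E'.shadow := by
    intro k
    induction k with
    | zero =>
      intro _
      obtain ⟨h3, hsub, _⟩ := hE3 e₀ he₀
      obtain ⟨a, b, c, hab, hac, hbc, rfl⟩ := Finset.card_eq_three.1 h3
      refine ⟨b, c, [], rfl, by simpa using hbc, ?_, trivial, ?_⟩
      · intro z hz; apply hsub; simp at hz ⊢; tauto
      · refine Finset.mem_shadow_iff.2 ⟨_, he₀, a, by simp, ?_⟩
        rw [Finset.erase_insert]; simp [hab, hac]
    | succ k ih =>
      intro hk
      obtain ⟨x, y, l, hl, hnd, hlU, ht, hs⟩ := ih (by omega)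
      have hd1 := hdeg _ hs
      obtain ⟨e, he, hel⟩ := Finset.exists_mem_notMem_of_card_lt_card
        (s := l.toFinset.image fun z => ({x, y, z} : Finset (Fin n)))
        (t := E'.filter fun e => {x, y} ⊆ e) (by
          refine lt_of_le_of_lt (Finset.card_image_le.trans (List.toFinset_card_le l)) ?_
          rw [hl]
          have h1 : (k : ℝ) < K + 2 := by
            have : (k : ℝ) ≤ K := by exact_mod_cast (by omega : k ≤ K)
            linarith
          exact_mod_cast (h1.trans_le hδn).trans_le hd1)
      obtain ⟨heE, hxye⟩ := Finset.mem_filter.1 he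
      obtain ⟨h3, heU, heH⟩ := hE3 e heE
      have hxy : x ≠ y := by simp at hnd; tauto
      have hc1 : (e \ {x, y}).card = 1 := by
        rw [Finset.card_sdiff_of_subset hxye, h3, Finset.card_pair hxy]
      obtain ⟨z, hz⟩ := Finset.card_eq_one.1 hc1
      have hee : e = ({x, y, z} : Finset (Fin n)) := by
        rw [← Finset.sdiff_union_of_subset hxye, hz]; ext; simp; tauto
      have hz' : z ∈ e \ {x, y} := by rw [hz]; simp
      simp at hz'
      obtain ⟨hze, hzx, hzy⟩ := hz'
      have hzl : z ∉ l := fun h => hel (by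
        rw [Finset.mem_image]; exact ⟨z, by simpa using h, hee.symm⟩)
      refine ⟨z, x, y :: l, by simp [hl], ?_, ?_, ⟨?_, ht⟩, ?_⟩
      · rw [List.nodup_cons]
        exact ⟨by simp [hzx, hzy, hzl], hnd⟩
      · intro w hw
        rw [List.mem_cons] at hw
        rcases hw with rfl | hw
        · exact heU hze
        · exact hlU w hw
      · have h5 : Edge H x y z := by rw [Edge, ← hee]; exact heH
        exact edge_rot (edge_rot h5)
      · refine Finset.mem_shadow_iff.2 ⟨e, heE, y, hxye (by simp), ?_⟩
        rw [hee]; ext w; simp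
        constructor
        · rintro ⟨h1, rfl | rfl | rfl⟩ <;> tauto
        · rintro (rfl | rfl) <;> simp [hzy, hxy]
  obtain ⟨x, y, l, hl, hnd, hlU, ht, _⟩ := main K le_rfl
  exact ⟨x :: y :: l, by simp [hl], hnd, hlU, ht⟩

/-- Weighted averaging: if every index is hit by at least `c * M` of the at most `M` candidates,
then some candidate hits indices of at least a `c`-fraction of the total weight. -/
lemma exists_heavy_hit {S ι : Type*} [Fintype ι] (hit : S → ι → Prop)
    [∀ x i, Decidable (hit x i)] (C : Finset S) (hC : C.Nonempty) (M c : ℝ)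
    (hc : 0 ≤ c) (hCM : (C.card : ℝ) ≤ M)
    (h : ∀ i, c * M ≤ ((C.filter fun x => hit x i).card : ℝ)) (w : ι → ℝ) (hw : ∀ i, 0 ≤ w i) :
    ∃ x ∈ C, c * ∑ i, w i ≤ ∑ i with hit x i, w i := by
  refine Finset.exists_le_of_sum_le hC ?_
  have h1 : ∑ x ∈ C, ∑ i with hit x i, w i =
      ∑ i, ((C.filter fun x => hit x i).card : ℝ) * w i := by
    simp_rw [Finset.sum_filter]
    rw [Finset.sum_comm]
    refine Finset.sum_congr rfl fun i _ => ?_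
    rw [← Finset.sum_filter, Finset.sum_const, nsmul_eq_mul]
  have hW : 0 ≤ ∑ i, w i := Finset.sum_nonneg fun i _ => hw i
  rw [h1, Finset.sum_const, nsmul_eq_mul]
  calc (C.card : ℝ) * (c * ∑ i, w i) ≤ M * (c * ∑ i, w i) := by gcongr
    _ = ∑ i, c * M * w i := by rw [Finset.mul_sum, Finset.mul_sum]; congr 1; ext; ring
    _ ≤ _ := Finset.sum_le_sum fun i _ => mul_le_mul_of_nonneg_right (h i) (hw i)

/-- Derandomised selection by the method of conditional expectations: giving the index `i` the
weight `2 ^ (-number of previous hits)`, each greedy step shrinks the total weight by the factor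
`1 - c / 2`, so after `t * s` steps every index has been hit at least `s` times. -/
lemma greedy {S ι : Type*} [Fintype ι] (hit : S → ι → Prop) [∀ x i, Decidable (hit x i)]
    (valid : List S → Prop) (c : ℝ) (hc1 : c ≤ 1) (t s : ℕ)
    (ht : (1 - c / 2) ^ t ≤ 1 / 4) (hs : Fintype.card ι < 2 ^ s) (h0 : valid [])
    (step : ∀ l, valid l → l.length < t * s → ∀ w : ι → ℝ, (∀ i, 0 ≤ w i) →
      ∃ x, valid (x :: l) ∧ c * ∑ i, w i ≤ ∑ i with hit x i, w i) :
    ∃ l, valid l ∧ l.length = t * s ∧ ∀ i, s ≤ l.countP fun x => hit x i := by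
  have main : ∀ k ≤ t * s, ∃ l, valid l ∧ l.length = k ∧
      ∑ i, ((1 : ℝ) / 2) ^ (l.countP fun x => hit x i) ≤ Fintype.card ι * (1 - c / 2) ^ k := by
    intro k
    induction k with
    | zero => intro _; exact ⟨[], h0, rfl, by simp⟩
    | succ k ih =>
      intro hk
      obtain ⟨l, hl, hlen, hsum⟩ := ih (by omega)
      obtain ⟨x, hx, hxw⟩ := step l hl (by omega)
        (fun i => ((1 : ℝ) / 2) ^ (l.countP fun x => hit x i)) (fun i => by positivity)
      refine ⟨x :: l, hx, by simp [hlen], ?_⟩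
      have h1 : ∀ i, ((1 : ℝ) / 2) ^ ((x :: l).countP fun x => hit x i) =
          ((1 : ℝ) / 2) ^ (l.countP fun x => hit x i) -
            1 / 2 * (if hit x i then ((1 : ℝ) / 2) ^ (l.countP fun x => hit x i) else 0) := by
        intro i
        by_cases h : hit x i
        · simp only [List.countP_cons, h, if_true, pow_succ, decide_true]; ring
        · simp [h]
      simp_rw [h1]
      rw [Finset.sum_sub_distrib, ← Finset.mul_sum, ← Finset.sum_filter]
      have h2 : (0 : ℝ) ≤ 1 - c / 2 := by linarith
      calc _ ≤ (1 - c / 2) * ∑ i, ((1 : ℝ) / 2) ^ (l.countP fun x => hit x i) := by linarith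
        _ ≤ (1 - c / 2) * (Fintype.card ι * (1 - c / 2) ^ k) := by gcongr
        _ = _ := by ring
  obtain ⟨l, hl, hlen, hsum⟩ := main (t * s) le_rfl
  refine ⟨l, hl, hlen, fun i => ?_⟩
  by_contra! hlt
  have h2 : (0 : ℝ) ≤ 1 - c / 2 := by linarith
  have h3 : ((1 : ℝ) / 2) ^ (l.countP fun x => hit x i) ≤
      ∑ i, ((1 : ℝ) / 2) ^ (l.countP fun x => hit x i) :=
    Finset.single_le_sum (f := fun i => ((1 : ℝ) / 2) ^ (l.countP fun x => hit x i))
      (fun i _ => by positivity) (Finset.mem_univ i)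
  have h4 : ((1 : ℝ) / 2) ^ s ≤ ((1 : ℝ) / 2) ^ (l.countP fun x => hit x i) :=
    pow_le_pow_of_le_one (by norm_num) (by norm_num) hlt.le
  have h5 : (1 - c / 2) ^ (t * s) ≤ (1 / 4 : ℝ) ^ s := by rw [pow_mul]; gcongr
  have h6 : (Fintype.card ι : ℝ) * (1 - c / 2) ^ (t * s) ≤ Fintype.card ι * (1 / 4 : ℝ) ^ s := by
    gcongr
  have h7 : (Fintype.card ι : ℝ) * (1 / 4 : ℝ) ^ s < 2 ^ s * (1 / 4 : ℝ) ^ s := by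
    gcongr
    exact_mod_cast hs
  have h8 : (2 : ℝ) ^ s * (1 / 4 : ℝ) ^ s = (1 / 2) ^ s := by rw [← mul_pow]; norm_num
  linarith

/-! ### Reservoir, absorbing path and covering -/

lemma exists_pow_le {q : ℝ} (h1 : q < 1) : ∃ t : ℕ, q ^ t ≤ 1 / 4 :=
  (exists_pow_lt_of_lt_one (by norm_num : (0 : ℝ) < 1 / 4) h1).imp fun _ h => h.le

lemma floor_large (κ : ℝ) (hκ : 0 < κ) :
    ∃ n₀ : ℕ, ∀ n, n₀ ≤ n → κ / 2 * n ≤ (⌊κ * n⌋₊ : ℝ) ∧ n * n < 2 ^ ⌊κ * n⌋₊ := by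
  have hlim := tendsto_pow_const_div_const_pow_of_one_lt 2 (one_lt_two : (1 : ℝ) < 2)
  have hev := hlim.eventually (gt_mem_nhds (by positivity : (0 : ℝ) < κ ^ 2 / 4))
  obtain ⟨s₀, hs₀⟩ := Filter.eventually_atTop.1 hev
  refine ⟨⌈(s₀ + 2) / κ⌉₊, fun n hn => ?_⟩
  have h1 : (s₀ + 2) / κ ≤ n := (Nat.le_ceil _).trans (by exact_mod_cast hn)
  rw [div_le_iff₀ hκ] at h1
  have h2 : κ * n < ⌊κ * n⌋₊ + 1 := Nat.lt_floor_add_one _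
  have hs0 : (0 : ℝ) ≤ s₀ := by positivity
  have h3 : κ / 2 * n ≤ (⌊κ * n⌋₊ : ℝ) := by linarith
  refine ⟨h3, ?_⟩
  have h4 : s₀ ≤ ⌊κ * n⌋₊ := Nat.le_floor (by linarith)
  have h5 := hs₀ _ h4
  rw [div_lt_iff₀ (by positivity)] at h5
  have h6 : (κ / 2 * n) ^ 2 ≤ (⌊κ * n⌋₊ : ℝ) ^ 2 := by gcongr
  have h7 : κ ^ 2 / 4 * ((n : ℝ) * n) < κ ^ 2 / 4 * 2 ^ ⌊κ * n⌋₊ := by nlinarith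
  have h8 := lt_of_mul_lt_mul_left h7 (by positivity)
  exact_mod_cast h8

lemma card_filter_toFinset {A : Type*} [DecidableEq A] (l : List A) (hl : l.Nodup) (p : A → Prop)
    [DecidablePred p] : (l.toFinset.filter p).card = l.countP fun x => p x := by
  have : l.toFinset.filter p = (l.filter fun x => p x).toFinset := by
    rw [List.toFinset_filter]; simp
  rw [this, List.toFinset_card_of_nodup (hl.filter _), ← List.countP_eq_length_filter]

/-- A small reservoir into which all codegrees are linear. -/
lemma reservoir (α μ : ℝ) (hα : 0 < α) (hα1 : α ≤ 1) (hμ : 0 < μ) :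
    ∃ β : ℝ, 0 < β ∧ ∃ n₀ : ℕ, ∀ n, n₀ ≤ n → ∀ H : Finset (Finset (Fin n)),
      CodegIn H univ (α * n) → ∃ R : Finset (Fin n), (R.card : ℝ) ≤ μ * n ∧
        CodegIn H R (β * n) := by
  obtain ⟨t, ht⟩ := exists_pow_le (q := 1 - α / 2 / 2) (by linarith)
  set κ := min (α / 2) μ / (t + 1) with hκ
  have hmin : 0 < min (α / 2) μ := lt_min (by positivity) hμ
  have hκ0 : 0 < κ := by positivity
  obtain ⟨n₀, hn₀⟩ := floor_large κ hκ0
  refine ⟨κ / 2, by positivity, n₀ + 1, fun n hn H hH => ?_⟩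
  obtain ⟨hs1, hs2⟩ := hn₀ n (by omega)
  set s := ⌊κ * n⌋₊ with hs
  have hn' : (0 : ℝ) < n := by exact_mod_cast (by omega : 0 < n)
  have hts : (t : ℝ) * s ≤ min (α / 2) μ * n := by
    have h1 : (s : ℝ) ≤ κ * n := Nat.floor_le (by positivity)
    calc (t : ℝ) * s ≤ (t + 1) * (κ * n) := by gcongr; linarith
      _ = _ := by rw [hκ]; field_simp
  have hts1 : (t : ℝ) * s ≤ α / 2 * n := hts.trans (by gcongr; exact min_le_left _ _)
  have hts2 : (t : ℝ) * s ≤ μ * n := hts.trans (by gcongr; exact min_le_right _ _)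
  obtain ⟨l, hl, hlen, hcount⟩ := greedy
    (fun (r : Fin n) (p : Fin n × Fin n) => Edge H p.1 p.2 r ∨ p.1 = p.2)
    List.Nodup (α / 2) (by linarith) t s ht (by simpa using hs2) List.nodup_nil (by
      intro l hl hlt w hw
      have hlt' : (l.length : ℝ) ≤ α / 2 * n := by
        refine le_trans ?_ hts1
        exact_mod_cast hlt.le
      have hlc : (l.toFinset.card : ℝ) ≤ α / 2 * n :=
        le_trans (by exact_mod_cast List.toFinset_card_le l) hlt'
      have hcodeg := CodegIn.sdiff (F := l.toFinset) (b' := α / 2 * n) hH (by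
        rw [Finset.univ_inter]; linarith)
      have hi : ∀ p : Fin n × Fin n, α / 2 * n ≤
          (((univ \ l.toFinset).filter fun r => Edge H p.1 p.2 r ∨ p.1 = p.2).card : ℝ) := by
        intro p
        by_cases hp : p.1 = p.2
        · have h1 : n ≤ ((univ \ l.toFinset).filter fun r => Edge H p.1 p.2 r ∨ p.1 = p.2).card
              + l.toFinset.card := by
            simp only [hp, or_true, Finset.filter_true]
            have := Finset.le_card_sdiff l.toFinset (univ : Finset (Fin n))
            simp only [Finset.card_univ, Fintype.card_fin] at this
            omega
          have h2 : (n : ℝ) ≤ (((univ \ l.toFinset).filter fun r =>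
              Edge H p.1 p.2 r ∨ p.1 = p.2).card : ℝ) + l.toFinset.card := by exact_mod_cast h1
          nlinarith
        · simpa [hp] using hcodeg p.1 p.2 hp
      obtain ⟨x, hx, hxw⟩ := exists_heavy_hit
        (fun (r : Fin n) (p : Fin n × Fin n) => Edge H p.1 p.2 r ∨ p.1 = p.2)
        (univ \ l.toFinset) (by
          have h1 := hi (⟨0, by omega⟩, ⟨0, by omega⟩)
          have h2 : (0 : ℝ) < α / 2 * n := by positivity
          have h3 := h2.trans_le h1
          exact (Finset.card_pos.1 (by exact_mod_cast h3)).mono (Finset.filter_subset _ _))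
        n (α / 2) (by positivity)
        (by exact_mod_cast (Finset.card_le_univ _).trans (by simp)) hi w hw
      refine ⟨x, List.nodup_cons.2 ⟨?_, hl⟩, hxw⟩
      simpa using hx)
  refine ⟨l.toFinset, ?_, ?_⟩
  · rw [List.toFinset_card_of_nodup hl, hlen]; push_cast; exact hts2
  · intro x y hxy
    have h1 := hcount (x, y)
    rw [← card_filter_toFinset l hl] at h1
    simp only [hxy, or_false] at h1
    exact hs1.trans (by exact_mod_cast h1)

lemma Tight.extend {n : ℕ} {H : Finset (Finset (Fin n))} {u v c e : Fin n}
    {l k r : List (Fin n)} (h1 : Tight H (l ++ [u, v])) (h2 : Tight H (u :: v :: (k ++ [c, e])))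
    (h3 : Tight H (c :: e :: r)) : Tight H ((l ++ [u, v]) ++ (k ++ c :: e :: r)) := by
  have h4 := Tight.join (l := u :: v :: k) h2 h3
  simpa using Tight.join h1 h4

/-- The absorbing path: outside `R` there is a tight path made of blocks such that every vertex is
absorbed by linearly many of the blocks. -/
lemma absorbing_path (d α : ℝ) (hd : 0 < d) (hα : 0 < α) :
    ∃ ρ : ℝ, 0 < ρ ∧ ∃ κ : ℝ, 0 < κ ∧ ∃ n₀ : ℕ, ∀ n, n₀ ≤ n → ∀ H : Finset (Finset (Fin n)),
      (∀ e ∈ H, e.card = 3) → CherryDense n H ρ d → ∀ R : Finset (Fin n),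
      CodegIn H (univ \ R) (α * n) → ∃ bs : List (Block n), (flat bs).Nodup ∧ Tight H (flat bs) ∧
        (∀ x ∈ flat bs, x ∉ R) ∧
        ∀ v, κ * n ≤ ((bs.countP fun B => Absorbs H B.1 v : ℕ) : ℝ) := by
  obtain ⟨ρ₁, hρ₁, γ, hγ, n₁, hmany⟩ := many_absorbers d (α / 2) hd (by positivity)
  obtain ⟨ρ₂, hρ₂, n₂, hconn⟩ := connect d (α / 4) hd (by positivity)
  have hc0 : 0 < min γ 1 := lt_min hγ one_pos
  have hc1 : min γ 1 ≤ 1 := min_le_right _ _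
  obtain ⟨t, ht⟩ := exists_pow_le (q := 1 - min γ 1 / 2) (by linarith)
  set κ := α / (18 * (t + 1)) with hκ
  have hκ0 : 0 < κ := by positivity
  obtain ⟨n₃, hn₃⟩ := floor_large κ hκ0
  refine ⟨min ρ₁ ρ₂, lt_min hρ₁ hρ₂, κ / 2, by positivity, n₁ + n₂ + n₃ + ⌈16 / α⌉₊ + 1, ?_⟩
  intro n hn H H3 hcd R hR
  have hmany := hmany n (by omega) H H3 (cherry_mono (min_le_left _ _) hcd)
  have hconn := hconn n (by omega) H H3 (cherry_mono (min_le_right _ _) hcd)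
  obtain ⟨hs1, hs2⟩ := hn₃ n (by omega)
  set s := ⌊κ * n⌋₊ with hs
  have hn' : (0 : ℝ) < n := by exact_mod_cast (by omega : 0 < n)
  have hαn : 16 ≤ α * n := by
    have h1 : 16 / α ≤ n := (Nat.le_ceil _).trans (by exact_mod_cast (by omega : ⌈16 / α⌉₊ ≤ n))
    rw [div_le_iff₀ hα] at h1; linarith
  have hts : 9 * ((t : ℝ) * s) ≤ α / 2 * n := by
    have h1 : (s : ℝ) ≤ κ * n := Nat.floor_le (by positivity)
    calc 9 * ((t : ℝ) * s) ≤ 9 * ((t + 1) * (κ * n)) := by gcongr; linarith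
      _ = _ := by rw [hκ]; field_simp; norm_num
  obtain ⟨bs, ⟨h1, h2, h3, -⟩, -, hcount⟩ := greedy
    (fun (B : Block n) (v : Fin n) => Absorbs H B.1 v)
    (fun bs => (flat bs).Nodup ∧ Tight H (flat bs) ∧ (∀ x ∈ flat bs, x ∉ R) ∧
      (flat bs).length ≤ 9 * bs.length) (min γ 1) hc1 t s ht
    (by
      have : n ≤ n * n := Nat.le_mul_self n
      simp only [Fintype.card_fin]; omega)
    ⟨by simp [flat], trivial, by simp [flat], by simp [flat]⟩ (by
      rintro bs ⟨hnd, htt, hbR, hlen⟩ hlt w hw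
      have hlen' : ((flat bs).toFinset.card : ℝ) ≤ α / 2 * n := by
        refine le_trans ?_ hts
        have : (flat bs).toFinset.card ≤ 9 * (t * s) :=
          (List.toFinset_card_le _).trans (hlen.trans (by omega))
        exact_mod_cast this
      set W := (univ \ R) \ (flat bs).toFinset with hW
      have hWc : CodegIn H W (α / 2 * n) := hR.sdiff (by
        have h1 : ((univ \ R) ∩ (flat bs).toFinset).card ≤ (flat bs).toFinset.card :=
          Finset.card_le_card Finset.inter_subset_right
        have h2 : (((univ \ R) ∩ (flat bs).toFinset).card : ℝ) ≤ (flat bs).toFinset.card := by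
          exact_mod_cast h1
        linarith)
      have hmem : ∀ x ∈ W, x ∉ R ∧ x ∉ flat bs := by
        intro x hx; simpa [hW] using hx
      have hm := hmany W hWc
      set C := univ.filter fun q : Fin n × Fin n × Fin n × Fin n =>
        q.1 ∈ W ∧ q.2.1 ∈ W ∧ q.2.2.1 ∈ W ∧ q.2.2.2 ∈ W ∧
          [q.1, q.2.1, q.2.2.1, q.2.2.2].Nodup ∧ Edge H q.1 q.2.1 q.2.2.1 ∧
          Edge H q.2.1 q.2.2.1 q.2.2.2 with hC
      have hi : ∀ v, min γ 1 * (n : ℝ) ^ 4 ≤ ((C.filter fun q => Absorbs H q v).card : ℝ) := by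
        intro v
        rw [hC, Finset.filter_filter]
        refine le_trans ?_ (hm v)
        gcongr
        exact min_le_left _ _
      obtain ⟨⟨a, b, c, e⟩, hq, hqw⟩ := exists_heavy_hit (fun q v => Absorbs H q v) C (by
          have h1 := hi ⟨0, by omega⟩
          have h2 : (0 : ℝ) < min γ 1 * (n : ℝ) ^ 4 := by positivity
          have h3 := h2.trans_le h1
          exact (Finset.card_pos.1 (by exact_mod_cast h3)).mono (Finset.filter_subset _ _))
        ((n : ℝ) ^ 4) (min γ 1) hc0.le (by
          have : C.card ≤ n ^ 4 := (Finset.card_le_univ _).trans (le_of_eq (by simp; ring))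
          exact_mod_cast this) hi w hw
      simp only [hC, Finset.mem_filter, Finset.mem_univ, true_and] at hq
      obtain ⟨ha, hb, hc, he, hqnd, habc, hbce⟩ := hq
      have hqF : ∀ x ∈ [a, b, c, e], x ∈ W := by
        intro x hx; simp at hx; rcases hx with rfl | rfl | rfl | rfl <;> assumption
      -- the connection from the new quadruple to the front of the current path
      have hk : ∃ k : List (Fin n), k.length ≤ 5 ∧ k.Nodup ∧ (∀ x ∈ k, x ∈ W ∧ x ∉ [a, b, c, e]) ∧
          Tight H (c :: e :: (k ++ flat bs)) := by
        match bs, hnd, htt with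
        | [], _, _ => exact ⟨[], by simp, by simp, by simp, by simp [flat, Tight]⟩
        | (⟨a', b', c', e'⟩, k') :: bs', hnd, htt =>
          have hWF : CodegIn H (W \ [a, b, c, e].toFinset) (α / 4 * n) := hWc.sdiff (by
            have h1 : (W ∩ [a, b, c, e].toFinset).card ≤ 4 :=
              (Finset.card_le_card Finset.inter_subset_right).trans (List.toFinset_card_le _)
            have h2 : ((W ∩ [a, b, c, e].toFinset).card : ℝ) ≤ 4 := by exact_mod_cast h1
            linarith)
          obtain ⟨k, hk5, hknd, hkW, hkt⟩ := hconn _ hWF c e a' b' (edge_ne H3 hbce).2.2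
            (by simp [flat] at hnd; tauto)
          refine ⟨k, hk5.le, hknd, fun x hx => ?_, ?_⟩
          · have := hkW x hx
            rwa [Finset.mem_sdiff, List.mem_toFinset] at this
          · exact Tight.join (l := c :: e :: k) hkt htt
      obtain ⟨k, hk5, hknd, hkW, hkt⟩ := hk
      have hflat : flat (((a, b, c, e), k) :: bs) = [a, b, c, e] ++ (k ++ flat bs) := rfl
      refine ⟨((a, b, c, e), k), ⟨?_, ?_, ?_, ?_⟩, hqw⟩
      · rw [hflat, List.nodup_append, List.nodup_append]
        refine ⟨hqnd, ⟨hknd, hnd, ?_⟩, ?_⟩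
        · rintro x hx y hy rfl
          exact (hmem x (hkW x hx).1).2 hy
        · rintro x hx y hy rfl
          rcases List.mem_append.1 hy with hy | hy
          · exact (hkW x hy).2 hx
          · exact (hmem x (hqF x hx)).2 hy
      · exact ⟨habc, hbce, hkt⟩
      · intro x hx
        rw [hflat, List.mem_append, List.mem_append] at hx
        rcases hx with hx | hx | hx
        · exact (hmem x (hqF x hx)).1
        · exact (hmem x (hkW x hx).1).1
        · exact hbR x hx
      · rw [hflat]; simp only [List.length_append, List.length_cons, List.length_nil]; omega)
  refine ⟨bs, h1, h2, h3, fun v => hs1.trans ?_⟩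
  exact_mod_cast hcount v

lemma exists_last_two {A : Type*} : ∀ {l : List A}, 2 ≤ l.length → ∃ l' u v, l = l' ++ [u, v]
  | [], h => by simp at h
  | [_], h => by simp at h
  | [a, b], _ => ⟨[], a, b, rfl⟩
  | a :: b :: c :: l, _ => by
      obtain ⟨l', u, v, h⟩ := exists_last_two (l := b :: c :: l) (by simp)
      exact ⟨a :: l', u, v, by rw [h]; rfl⟩

/-- Covering: given a reservoir `R` and a path `p` avoiding it, `p` extends to a tight path which
uses few reservoir vertices and misses few vertices outside `R`. A longest extension using at most
`5 / (K + 2)` reservoir vertices per path vertex works, as otherwise a path of `K + 2` unused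
vertices could be attached through the reservoir. -/
lemma cover {n K : ℕ} {H : Finset (Finset (Fin n))} {R : Finset (Fin n)} {b ε : ℝ}
    (hconn : ∀ W : Finset (Fin n), CodegIn H W (b / 2) →
      ∀ a b c e : Fin n, a ≠ b → c ≠ e → ∃ k : List (Fin n), k.length = 5 ∧ k.Nodup ∧
        (∀ x ∈ k, x ∈ W) ∧ Tight H (a :: b :: (k ++ [c, e])))
    (hlong : ∀ U : Finset (Fin n), ε ≤ (U.card : ℝ) →
      ∃ l : List (Fin n), l.length = K + 2 ∧ l.Nodup ∧ (∀ x ∈ l, x ∈ U) ∧ Tight H l)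
    (hR : CodegIn H R b) (hK : 5 * (n : ℝ) ≤ (K + 2) * (b / 2)) (p : List (Fin n))
    (hp2 : 2 ≤ p.length) (hpn : p.Nodup) (hpt : Tight H p) (hpR : ∀ x ∈ p, x ∉ R) :
    ∃ r, (p ++ r).Nodup ∧ Tight H (p ++ r) ∧ CodegIn H (R \ (p ++ r).toFinset) (b / 2) ∧
      ((univ \ (R ∪ (p ++ r).toFinset)).card : ℝ) < ε := by
  classical
  let P : ℕ → Prop := fun m => ∃ r, (p ++ r).Nodup ∧ Tight H (p ++ r) ∧
    (K + 2) * (R ∩ (p ++ r).toFinset).card ≤ 5 * (p ++ r).length ∧ (p ++ r).length = m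
  have hle : ∀ l : List (Fin n), l.Nodup → l.length ≤ n := fun l hl => by
    simpa using hl.length_le_card
  have hP0 : P p.length := by
    refine ⟨[], by simpa, by simpa, ?_, by simp⟩
    have : R ∩ (p ++ []).toFinset = ∅ := by
      ext x; simp; exact fun h1 h2 => hpR x h2 h1
    rw [this]; simp
  obtain ⟨r, hnd, ht, hRc, hm⟩ := Nat.findGreatest_spec (hle p hpn) hP0
  have hmax := fun k => Nat.findGreatest_is_greatest (P := P) (n := n) (k := k)
  rw [← hm] at hmax
  have hcod : CodegIn H (R \ (p ++ r).toFinset) (b / 2) := hR.sdiff (by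
    have h1 : (K + 2) * (R ∩ (p ++ r).toFinset).card ≤ 5 * n :=
      hRc.trans (Nat.mul_le_mul_left 5 (hle _ hnd))
    have h2 : ((K : ℝ) + 2) * ((R ∩ (p ++ r).toFinset).card : ℝ) ≤ 5 * n := by exact_mod_cast h1
    have h3 : ((R ∩ (p ++ r).toFinset).card : ℝ) ≤ b / 2 :=
      le_of_mul_le_mul_left (h2.trans hK) (by positivity)
    linarith)
  refine ⟨r, hnd, ht, hcod, ?_⟩
  by_contra! hU
  obtain ⟨q, hql, hqnd, hqU, hqt⟩ := hlong _ hU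
  have hqU' : ∀ x ∈ q, x ∉ R ∧ x ∉ p ++ r := by
    intro x hx
    have := hqU x hx
    simpa only [Finset.mem_sdiff, Finset.mem_univ, true_and, Finset.mem_union, List.mem_toFinset,
      not_or] using this
  match q, hql, hqnd, hqU', hqt with
  | c :: e :: q', hql, hqnd, hqU', hqt =>
    obtain ⟨l', u, v, hl'⟩ := exists_last_two (l := p ++ r) (by simp; omega)
    have huv : u ≠ v := by
      rw [hl', List.nodup_append] at hnd
      simpa using hnd.2.1
    have hce : c ≠ e := by simp at hqnd; tauto
    obtain ⟨k, hk5, hknd, hkW, hkt⟩ := hconn _ hcod u v c e huv hce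
    have hkW' : ∀ x ∈ k, x ∈ R ∧ x ∉ p ++ r := by
      intro x hx
      have := hkW x hx
      rwa [Finset.mem_sdiff, List.mem_toFinset] at this
    have hnew : p ++ (r ++ (k ++ c :: e :: q')) = (p ++ r) ++ (k ++ c :: e :: q') := by simp
    have hnd' : (p ++ (r ++ (k ++ c :: e :: q'))).Nodup := by
      rw [hnew]
      refine List.nodup_append.2 ⟨hnd, List.nodup_append.2 ⟨hknd, hqnd, ?_⟩, ?_⟩
      · rintro x hx y hy rfl
        exact (hqU' x hy).1 (hkW' x hx).1
      · rintro x hx y hy rfl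
        rcases List.mem_append.1 hy with hy | hy
        · exact (hkW' x hy).2 hx
        · exact (hqU' x hy).2 hx
    have hlen : (p ++ (r ++ (k ++ c :: e :: q'))).length = (p ++ r).length + (5 + (K + 2)) := by
      rw [hnew, List.length_append (as := p ++ r), List.length_append (as := k), hk5, hql]
    refine hmax ((p ++ r).length + (5 + (K + 2))) (by omega) (hlen ▸ hle _ hnd') ?_
    refine ⟨r ++ (k ++ c :: e :: q'), hnd', ?_, ?_, hlen⟩
    · rw [hnew, hl']
      rw [hl'] at ht
      exact Tight.extend ht hkt hqt
    · have h1 : (R ∩ (p ++ (r ++ (k ++ c :: e :: q'))).toFinset).card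
          ≤ (R ∩ (p ++ r).toFinset).card + 5 := by
        rw [← hk5]
        refine le_trans (Finset.card_le_card (t := (R ∩ (p ++ r).toFinset) ∪ k.toFinset) ?_)
          ((Finset.card_union_le _ _).trans (Nat.add_le_add_left (List.toFinset_card_le k) _))
        intro x hx
        rw [hnew] at hx
        simp only [Finset.mem_inter, List.mem_toFinset, Finset.mem_union] at hx ⊢
        obtain ⟨hxR, hx⟩ := hx
        rcases List.mem_append.1 hx with hx | hx
        · exact Or.inl ⟨hxR, hx⟩
        · rcases List.mem_append.1 hx with hx | hx
          · exact Or.inr hx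
          · exact absurd hxR (hqU' x hx).1
      rw [hlen]
      calc (K + 2) * (R ∩ (p ++ (r ++ (k ++ c :: e :: q'))).toFinset).card
          ≤ (K + 2) * ((R ∩ (p ++ r).toFinset).card + 5) := Nat.mul_le_mul_left _ h1
        _ = (K + 2) * (R ∩ (p ++ r).toFinset).card + 5 * (K + 2) := by ring
        _ ≤ _ := by omega

end CherryHam

/-! ### The tight Hamilton cycle -/

open CherryHam in
/-- For every `d, α ∈ (0,1]` there exist `n₀` and `ρ > 0` such that for all `n ≥ n₀`,
every `n`-vertex `(ρ,d)`-cherry-dense 3-graph `H` with `δ₂(H) ≥ αn` has a tight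
Hamilton cycle. -/
theorem stmt_1 (d α : ℝ) (hd : 0 < d) (hd1 : d ≤ 1) (hα : 0 < α) (hα1 : α ≤ 1) :
    ∃ (n₀ : ℕ) (ρ : ℝ), 0 < ρ ∧
      ∀ n : ℕ, n₀ ≤ n → ∀ H : Finset (Finset (Fin n)),
        (∀ e ∈ H, e.card = 3) →
        CherryDense n H ρ d →
        (∀ x y : Fin n, x ≠ y → α * (n : ℝ) ≤ (codeg n H x y : ℝ)) →
        HasTightHamCycle n H := by
  obtain ⟨ρ₁, hρ₁, κ, hκ, n₁, habs⟩ := absorbing_path d (α / 2) hd (by positivity)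
  -- the reservoir must be small enough to be absorbed entirely
  obtain ⟨β, hβ, n₂, hres⟩ := reservoir α (min (α / 2) (κ / 2)) hα hα1
    (lt_min (by positivity) (by positivity))
  obtain ⟨ρ₂, hρ₂, n₃, hconn⟩ := connect d (β / 2) hd (by positivity)
  obtain ⟨ρ₃, hρ₃, n₄, hlong⟩ := long_path d (κ / 2) hd (by positivity) ⌈10 / β⌉₊
  refine ⟨n₁ + n₂ + n₃ + n₄ + 1, min ρ₁ (min ρ₂ ρ₃), lt_min hρ₁ (lt_min hρ₂ hρ₃), ?_⟩
  intro n hn H H3 hcd hcod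
  have hn' : (0 : ℝ) < n := by exact_mod_cast (by omega : 0 < n)
  have habs := habs n (by omega) H H3 (cherry_mono (min_le_left _ _) hcd)
  have hconn := hconn n (by omega) H H3
    (cherry_mono ((min_le_right _ _).trans (min_le_left _ _)) hcd)
  have hlong := hlong n (by omega) H H3
    (cherry_mono ((min_le_right _ _).trans (min_le_right _ _)) hcd)
  have huniv : CodegIn H univ (α * n) := fun x y hxy =>
    (hcod x y hxy).trans (by exact_mod_cast codeg_le H3 hxy)
  obtain ⟨R, hRc, hR⟩ := hres n (by omega) H huniv
  have hRα : (R.card : ℝ) ≤ α / 2 * n := hRc.trans (by gcongr; exact min_le_left _ _)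
  have hRκ : (R.card : ℝ) ≤ κ / 2 * n := hRc.trans (by gcongr; exact min_le_right _ _)
  obtain ⟨bs, hnd, ht, hbR, hcount⟩ := habs R (huniv.sdiff (by rw [Finset.univ_inter]; linarith))
  -- the absorbing path is nonempty because it absorbs every vertex; `x`, `y` are its first two
  obtain ⟨x, y, r₀, hflat⟩ : ∃ x y r₀, flat bs = x :: y :: r₀ := by
    match bs, hcount with
    | [], hcount =>
      have h1 := hcount ⟨0, by omega⟩
      have h2 : 0 < κ * n := by positivity
      simp at h1
      linarith
    | (q, k) :: bs, _ => exact ⟨_, _, _, rfl⟩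
  obtain ⟨r, hnd', ht', hcodR, hU⟩ := cover (K := ⌈10 / β⌉₊) (b := β * n) (ε := κ / 2 * n)
    (fun W hW => hconn W (by rwa [div_mul_eq_mul_div])) hlong hR
    (by
      have h1 : 10 / β ≤ (⌈10 / β⌉₊ : ℝ) := Nat.le_ceil _
      rw [div_le_iff₀ hβ] at h1
      have h2 : 10 * (n : ℝ) ≤ ⌈10 / β⌉₊ * β * n := by gcongr
      have h3 : 0 < β * n := by positivity
      linarith)
    (flat bs) (by rw [hflat]; simp) hnd ht hbR
  obtain ⟨l', u, v, hl'⟩ := exists_last_two (l := flat bs ++ r) (by rw [hflat]; simp)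
  have huv : u ≠ v := by
    have := hnd'
    rw [hl', List.nodup_append] at this
    simpa using this.2.1
  have hxy : x ≠ y := by
    have := hnd
    rw [hflat] at this
    simp at this
    tauto
  obtain ⟨k, -, hknd, hkW, hkt⟩ := hconn _ (by rwa [div_mul_eq_mul_div]) u v x y huv hxy
  have hkW' : ∀ z ∈ k, z ∉ flat bs ++ r := by
    intro z hz
    have := hkW z hz
    rw [Finset.mem_sdiff, List.mem_toFinset] at this
    exact this.2
  have hcyc : Tight H (flat bs ++ (r ++ k ++ [x, y])) := by
    have h1 := ht'
    rw [hl'] at h1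
    have := Tight.extend (r := []) h1 hkt trivial
    rw [← hl'] at this
    simpa using this
  have hcycnd : (flat bs ++ (r ++ k)).Nodup := by
    rw [← List.append_assoc]
    refine List.nodup_append.2 ⟨hnd', hknd, ?_⟩
    rintro a ha b hb rfl
    exact hkW' a hb ha
  set M : Finset (Fin n) := univ \ (flat bs ++ (r ++ k)).toFinset with hM
  have hMc : (M.card : ℝ) ≤ κ * n := by
    have h1 : M.card ≤ (univ \ (R ∪ (flat bs ++ r).toFinset)).card + R.card := by
      refine (Finset.card_le_card ?_).trans (Finset.card_union_le _ _)
      intro z hz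
      simp [hM] at hz ⊢
      tauto
    have h2 : (M.card : ℝ) ≤ ((univ \ (R ∪ (flat bs ++ r).toFinset)).card : ℝ) + R.card := by
      exact_mod_cast h1
    linarith
  obtain ⟨l, hperm, htl, hpre⟩ := absorb (H := H) bs hnd M (fun v _ => by
    exact_mod_cast hMc.trans (hcount v))
  have hmemM : ∀ z, z ∈ M ↔ z ∉ flat bs ++ (r ++ k) := by
    intro z
    rw [hM, Finset.mem_sdiff, List.mem_toFinset]
    simp only [Finset.mem_univ, true_and]
  have hperm2 : (l ++ (r ++ k)).Perm ((flat bs ++ (r ++ k)) ++ M.toList) := by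
    refine (hperm.append_right _).trans ?_
    rw [List.append_assoc, List.append_assoc]
    exact List.Perm.append_left _ List.perm_append_comm
  refine hamCycle_of_list (l ++ (r ++ k)) ?_ ?_ x y ?_ ?_
  · rw [hperm2.nodup_iff]
    refine List.nodup_append.2 ⟨hcycnd, Finset.nodup_toList _, ?_⟩
    rintro a ha b hb rfl
    exact (hmemM a).1 (Finset.mem_toList.1 hb) ha
  · intro z
    rw [hperm2.mem_iff, List.mem_append, Finset.mem_toList, hmemM]
    exact em _
  · exact (hpre x y (by rw [hflat]; exact ⟨r₀, rfl⟩)).trans (List.prefix_append _ _)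
  · have := htl _ hcyc
    simpa using this
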